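/- The Fock-module operators e_j, f_j (j ≥ 0) defined in the context, together with ψ_k := [e_k, f_0], satisfy all of the affine Yangian relations (Y0)–(Y6) listed in the context, with parameters h1, h2, h3 = −h1−h2; in other words, the free vector space F on the set of partitions is a module over the affine Yangian of gl_1. -/

import Mathlib

noncomputable section

/-- A partition: a weakly decreasing function `ℕ → ℕ` (0-indexed rows) that takes the
value `0` somewhere (hence eventually). -/
def IsPtn (f : ℕ → ℕ) : Prop := Antitone f ∧ ∃ N, f N = 0

/-- The type of partitions. -/
abbrev Ptn : Type := {f : ℕ → ℕ // IsPtn f}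

/-- The Fock space: the free `ℂ`-vector space with basis indexed by all partitions. -/
abbrev FockSp : Type := Ptn →₀ ℂ

namespace Fock

/-- The number of nonzero parts of a partition (the first 0-indexed row equal to zero). -/
def plen (lam : Ptn) : ℕ := Nat.find lam.2.2

/-- `|λ| = Σ_i λ_i`. -/
def psize (lam : Ptn) : ℕ := ∑ i ∈ Finset.range (plen lam), lam.1 i

/-- A box may be added in (0-indexed) row `i`, i.e. `λ + 1_i` is again a partition. -/
def Addable (lam : Ptn) (i : ℕ) : Prop := ∀ p, p < i → lam.1 i < lam.1 p

instance (lam : Ptn) (i : ℕ) : Decidable (Addable lam i) :=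
  inferInstanceAs (Decidable (∀ p, p < i → lam.1 i < lam.1 p))

/-- A box may be removed from (0-indexed) row `i`, i.e. `λ − 1_i` is again a partition. -/
def Removable (lam : Ptn) (i : ℕ) : Prop := lam.1 (i + 1) < lam.1 i

instance (lam : Ptn) (i : ℕ) : Decidable (Removable lam i) :=
  inferInstanceAs (Decidable (lam.1 (i + 1) < lam.1 i))

/-- The partition `λ + 1_i`. -/
def addBox (lam : Ptn) (i : ℕ) (h : Addable lam i) : Ptn :=
  ⟨Function.update lam.1 i (lam.1 i + 1), by
    constructor
    · intro a b hab
      rw [Function.update_apply, Function.update_apply]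
      split_ifs with hb ha ha
      · exact le_rfl
      · have : a < i := lt_of_le_of_ne (hb ▸ hab) ha
        exact h a this
      · have : lam.1 b ≤ lam.1 i := lam.2.1 (ha ▸ hab)
        omega
      · exact lam.2.1 hab
    · obtain ⟨N, hN⟩ := lam.2.2
      refine ⟨max N (i + 1), ?_⟩
      rw [Function.update_apply, if_neg (by omega : ¬ max N (i + 1) = i)]
      have := lam.2.1 (le_max_left N (i + 1))
      omega⟩

/-- The partition `λ − 1_i`. -/
def remBox (lam : Ptn) (i : ℕ) (h : Removable lam i) : Ptn :=
  ⟨Function.update lam.1 i (lam.1 i - 1), by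
    constructor
    · intro a b hab
      rw [Function.update_apply, Function.update_apply]
      split_ifs with hb ha ha
      · exact le_rfl
      · have : lam.1 i ≤ lam.1 a := lam.2.1 (le_of_lt (lt_of_le_of_ne (hb ▸ hab) ha))
        omega
      · have h1 : lam.1 b ≤ lam.1 (i + 1) := lam.2.1 (by omega : i + 1 ≤ b)
        have h2 : lam.1 (i + 1) < lam.1 i := h
        omega
      · exact lam.2.1 hab
    · obtain ⟨N, hN⟩ := lam.2.2
      refine ⟨max N (i + 1), ?_⟩
      rw [Function.update_apply, if_neg (by omega : ¬ max N (i + 1) = i)]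
      have := lam.2.1 (le_max_left N (i + 1))
      omega⟩

variable (h1 h2 u : ℂ)

/-- The coefficient of `|λ + 1_i⟩` in `e_j |λ⟩` (0-indexed row `i`). -/
def ecoef (j : ℕ) (lam : Ptn) (i : ℕ) : ℂ :=
  (1 / h1) *
  (∏ p ∈ Finset.range i,
    (((((lam.1 i : ℂ) - (lam.1 p : ℂ)) * h1 + (((i : ℂ) - (p : ℂ)) - 1) * h2)
        * (((lam.1 i : ℂ) - (lam.1 p : ℂ) + 1) * h1 + (((i : ℂ) - (p : ℂ)) + 1) * h2))
      / ((((lam.1 i : ℂ) - (lam.1 p : ℂ)) * h1 + ((i : ℂ) - (p : ℂ)) * h2)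
        * (((lam.1 i : ℂ) - (lam.1 p : ℂ) + 1) * h1 + ((i : ℂ) - (p : ℂ)) * h2)))) *
  ((lam.1 i : ℂ) * h1 + (i : ℂ) * h2 + u) ^ j

/-- The coefficient of `|λ − 1_i⟩` in `f_j |λ⟩` (0-indexed row `i`). -/
def fcoef (j : ℕ) (lam : Ptn) (i : ℕ) : ℂ :=
  (-(1 / h1)) *
  ((((lam.1 (i+1) : ℂ) - (lam.1 i : ℂ)) * h1)
      / ((((lam.1 (i+1) : ℂ) - (lam.1 i : ℂ)) + 1) * h1 + h2)) *
  (∏ p ∈ Finset.Icc (i + 1) (plen lam),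
    (((((lam.1 p : ℂ) - (lam.1 i : ℂ) + 1) * h1 + (((p : ℂ) - (i : ℂ)) + 1) * h2)
        * (((lam.1 (p+1) : ℂ) - (lam.1 i : ℂ)) * h1 + ((p : ℂ) - (i : ℂ)) * h2))
      / ((((lam.1 (p+1) : ℂ) - (lam.1 i : ℂ) + 1) * h1 + (((p : ℂ) - (i : ℂ)) + 1) * h2)
        * (((lam.1 p : ℂ) - (lam.1 i : ℂ)) * h1 + ((p : ℂ) - (i : ℂ)) * h2)))) *
  (((lam.1 i : ℂ) - 1) * h1 + (i : ℂ) * h2 + u) ^ j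

/-- `e_j |λ⟩`, a finite sum over the rows where a box can be added (all of which lie in
`{0, …, plen λ}`). -/
def evec (j : ℕ) (lam : Ptn) : FockSp :=
  ∑ i ∈ Finset.range (plen lam + 1),
    if h : Addable lam i then Finsupp.single (addBox lam i h) (ecoef h1 h2 u j lam i) else 0

/-- `f_j |λ⟩`, a finite sum over the rows where a box can be removed (all of which lie in
`{0, …, plen λ − 1}`). -/
def fvec (j : ℕ) (lam : Ptn) : FockSp :=
  ∑ i ∈ Finset.range (plen lam),
    if h : Removable lam i then Finsupp.single (remBox lam i h) (fcoef h1 h2 u j lam i) else 0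

/-- The Fock-module operator `e_j`. -/
def eOp (j : ℕ) : Module.End ℂ FockSp :=
  Finsupp.lsum ℂ fun lam => LinearMap.toSpanSingleton ℂ FockSp (evec h1 h2 u j lam)

/-- The Fock-module operator `f_j`. -/
def fOp (j : ℕ) : Module.End ℂ FockSp :=
  Finsupp.lsum ℂ fun lam => LinearMap.toSpanSingleton ℂ FockSp (fvec h1 h2 u j lam)

/-- `ψ_k := [e_k, f_0]`. -/
def psiOp (k : ℕ) : Module.End ℂ FockSp :=
  eOp h1 h2 u k * fOp h1 h2 u 0 - fOp h1 h2 u 0 * eOp h1 h2 u k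

end Fock

/-- Finitely supported combinations of integer sequences. -/
abbrev LatSp : Type := (ℕ → ℤ) →₀ ℂ

/-- The structure function `(t - h2)(t - h3) / (t (t + h1))` with `h3 = -h1-h2`. -/
def gfun (h1 h2 t : ℂ) : ℂ := ((t - h2) * (t + h1 + h2)) / (t * (t + h1))

/-- Data of a family of one-box operators on integer sequences: the box moves the `i`-th entry
by `sgn`, and the coefficient involves the rows preceding `i` for the strict total order `r`. -/
structure StepData (h1 : ℂ) where
  r : ℕ → ℕ → Prop
  dec : DecidableRel r
  irrefl : ∀ a, ¬ r a a
  total : ∀ a b, a ≠ b → r a b ∨ r b a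
  trans : ∀ a b c, r a b → r b c → r a c
  sgn : ℤ
  sgn_sq : sgn * sgn = 1
  base : ℕ → ℂ
  own : ℕ → ℤ → ℂ
  s : Finset ℕ
  sep : ∀ i p, i ≠ p → ∀ k : ℤ, base i - base p + k * h1 ≠ 0

attribute [instance] StepData.dec

namespace StepData

variable {h1 : ℂ} (h2 : ℂ) (D : StepData h1)

/-- The position of the next box in row `i`. -/
def pos (f : ℕ → ℤ) (i : ℕ) : ℂ := ((D.sgn * f i : ℤ) : ℂ) * h1 + D.base i

/-- The contribution of row `p` to the coefficient of row `i`. -/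
def pair (p i : ℕ) (t : ℂ) : ℂ := if D.r p i then gfun h1 h2 t else 1

/-- The coefficient of the move in row `i`. -/
def coef (f : ℕ → ℤ) (i : ℕ) : ℂ :=
  D.own i (f i) * ∏ p ∈ D.s, D.pair h2 p i (D.pos f i - D.pos f p)

/-- The sequence after a move in row `i`. -/
def step (f : ℕ → ℤ) (i : ℕ) : ℕ → ℤ := f + Pi.single i D.sgn

/-- The operator of mode `j`. -/
def op (j : ℕ) : Module.End ℂ LatSp :=
  Finsupp.lsum ℂ fun f => LinearMap.toSpanSingleton ℂ LatSp
    (∑ i ∈ D.s, Finsupp.single (D.step f i) (D.coef h2 f i * D.pos f i ^ j))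

theorem op_single (j : ℕ) (f : ℕ → ℤ) (c : ℂ) :
    D.op h2 j (Finsupp.single f c) =
      ∑ i ∈ D.s, Finsupp.single (D.step f i) (c * (D.coef h2 f i * D.pos f i ^ j)) := by
  simp [op, Finset.smul_sum, -Finsupp.single_mul]

theorem step_same (f : ℕ → ℤ) (i : ℕ) : D.step f i i = f i + D.sgn := by simp [step]

theorem step_ne (f : ℕ → ℤ) {i p : ℕ} (h : p ≠ i) : D.step f i p = f p := by simp [step, h]

theorem step_comm (f : ℕ → ℤ) (i p : ℕ) :
    D.step (D.step f i) p = D.step (D.step f p) i := by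
  simp only [step]; abel

theorem pos_step_same (f : ℕ → ℤ) (i : ℕ) : D.pos (D.step f i) i = D.pos f i + h1 := by
  simp only [pos, step_same, mul_add, D.sgn_sq]
  push_cast
  ring

theorem pos_step_ne (f : ℕ → ℤ) {i p : ℕ} (h : p ≠ i) : D.pos (D.step f i) p = D.pos f p := by
  simp only [pos, D.step_ne f h]

theorem pos_sub_ne_zero (f : ℕ → ℤ) {i p : ℕ} (h : i ≠ p) (k : ℤ) :
    D.pos f i - D.pos f p + k * h1 ≠ 0 := by
  have := D.sep i p h (D.sgn * f i - D.sgn * f p + k)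
  intro h0
  apply this
  rw [← h0]
  simp only [pos]
  push_cast
  ring

/-- Isolating the dependence of a coefficient on one other row. -/
theorem coef_factor_one (f : ℕ → ℤ) (a : ℕ) {b : ℕ} (hb : b ∈ D.s) (hab : a ≠ b) :
    ∃ Q, ∀ f' : ℕ → ℤ, (∀ i, i ≠ b → f' i = f i) →
      D.coef h2 f' a = Q * D.pair h2 b a (D.pos f a - D.pos f' b) := by
  refine ⟨D.own a (f a) * ∏ p ∈ D.s.erase b, D.pair h2 p a (D.pos f a - D.pos f p), ?_⟩
  intro f' hf'
  have hpos : ∀ i, i ≠ b → D.pos f' i = D.pos f i := fun i hi => by simp only [pos, hf' i hi]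
  rw [coef, ← Finset.mul_prod_erase _ _ hb, hf' a hab, hpos a hab,
    Finset.prod_congr rfl fun p hp => by rw [hpos p (Finset.ne_of_mem_erase hp)]]
  ring

/-- Isolating the dependence of a coefficient on two other rows. -/
theorem coef_factor_two (f : ℕ → ℤ) (a : ℕ) {b c : ℕ} (hb : b ∈ D.s) (hc : c ∈ D.s)
    (hab : a ≠ b) (hac : a ≠ c) (hbc : b ≠ c) :
    ∃ Q, ∀ f' : ℕ → ℤ, (∀ i, i ≠ b → i ≠ c → f' i = f i) →
      D.coef h2 f' a = Q * D.pair h2 b a (D.pos f a - D.pos f' b) *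
        D.pair h2 c a (D.pos f a - D.pos f' c) := by
  refine ⟨D.own a (f a) *
    ∏ p ∈ (D.s.erase b).erase c, D.pair h2 p a (D.pos f a - D.pos f p), ?_⟩
  intro f' hf'
  have hpos : ∀ i, i ≠ b → i ≠ c → D.pos f' i = D.pos f i :=
    fun i hi hi' => by simp only [pos, hf' i hi hi']
  rw [coef, ← Finset.mul_prod_erase _ _ hb,
    ← Finset.mul_prod_erase _ _ (Finset.mem_erase.2 ⟨hbc.symm, hc⟩), hf' a hab hac, hpos a hab hac,
    Finset.prod_congr rfl fun p hp => by
      rw [hpos p (Finset.ne_of_mem_erase (Finset.mem_of_mem_erase hp))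
        (Finset.ne_of_mem_erase hp)]]
  ring

theorem asymm {a b : ℕ} (h : D.r a b) : ¬ D.r b a := fun h' => D.irrefl a (D.trans _ _ _ h h')

theorem pair_of_r {a b : ℕ} (h : D.r a b) (t : ℂ) : D.pair h2 a b t = gfun h1 h2 t := if_pos h

theorem pair_of_r_symm {a b : ℕ} (h : D.r a b) (t : ℂ) : D.pair h2 b a t = 1 :=
  if_neg (D.asymm h)

/-- The result of applying two modes to a basis vector, with monomials replaced by an arbitrary
function of the two box positions (the last box first). -/
def word₂ (f : ℕ → ℤ) : (ℂ → ℂ → ℂ) →ₗ[ℂ] LatSp where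
  toFun φ := ∑ a ∈ D.s, ∑ b ∈ D.s, (φ (D.pos (D.step f a) b) (D.pos f a) *
    (D.coef h2 f a * D.coef h2 (D.step f a) b)) •
      (Finsupp.single (D.step (D.step f a) b) (1 : ℂ) : LatSp)
  map_add' φ φ' := by simp [add_mul, add_smul, Finset.sum_add_distrib]
  map_smul' c φ := by simp [mul_assoc, mul_smul, Finset.smul_sum]

/-- The analogue of `word₂` for three modes. -/
def word₃ (f : ℕ → ℤ) : (ℂ → ℂ → ℂ → ℂ) →ₗ[ℂ] LatSp where
  toFun φ := ∑ a ∈ D.s, ∑ b ∈ D.s, ∑ c ∈ D.s,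
    (φ (D.pos (D.step (D.step f a) b) c) (D.pos (D.step f a) b) (D.pos f a) *
    (D.coef h2 f a * D.coef h2 (D.step f a) b * D.coef h2 (D.step (D.step f a) b) c)) •
      (Finsupp.single (D.step (D.step (D.step f a) b) c) (1 : ℂ) : LatSp)
  map_add' φ φ' := by simp [add_mul, add_smul, Finset.sum_add_distrib]
  map_smul' c φ := by simp [mul_assoc, mul_smul, Finset.smul_sum]

theorem op_op (i j : ℕ) (f : ℕ → ℤ) :
    D.op h2 i (D.op h2 j (Finsupp.single f 1)) = D.word₂ h2 f fun z w => z ^ i * w ^ j := by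
  simp only [op_single, map_sum, word₂, LinearMap.coe_mk, AddHom.coe_mk, Finsupp.smul_single,
    smul_eq_mul]
  refine Finset.sum_congr rfl fun a _ => Finset.sum_congr rfl fun b _ => ?_
  congr 1; ring

theorem op_op_op (i j k : ℕ) (f : ℕ → ℤ) :
    D.op h2 i (D.op h2 j (D.op h2 k (Finsupp.single f 1))) =
      D.word₃ h2 f fun z w v => z ^ i * w ^ j * v ^ k := by
  simp only [op_single, map_sum, word₃, LinearMap.coe_mk, AddHom.coe_mk, Finsupp.smul_single,
    smul_eq_mul]
  refine Finset.sum_congr rfl fun a _ => Finset.sum_congr rfl fun b _ =>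
    Finset.sum_congr rfl fun c _ => ?_
  congr 1; ring

end StepData

theorem sum_sum_eq_zero_of_antisymm {M : Type*} [AddCommGroup M] [Module ℂ M] (s : Finset ℕ)
    (T : ℕ → ℕ → M) (h : ∀ a ∈ s, ∀ b ∈ s, T a b + T b a = 0) :
    ∑ a ∈ s, ∑ b ∈ s, T a b = 0 := by
  have h2 : (2 : ℂ) • ∑ a ∈ s, ∑ b ∈ s, T a b = 0 := by
    rw [two_smul]
    nth_rewrite 2 [Finset.sum_comm]
    simp only [← Finset.sum_add_distrib]
    exact Finset.sum_eq_zero fun a ha => Finset.sum_eq_zero fun b hb => h a ha b hb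
  exact (smul_eq_zero.1 h2).resolve_left two_ne_zero

theorem sum_sum_sum_eq_zero_of_symm {M : Type*} [AddCommGroup M] [Module ℂ M] (s : Finset ℕ)
    (T : ℕ → ℕ → ℕ → M)
    (h : ∀ a ∈ s, ∀ b ∈ s, ∀ c ∈ s,
      T a b c + T a c b + T b a c + T b c a + T c a b + T c b a = 0) :
    ∑ a ∈ s, ∑ b ∈ s, ∑ c ∈ s, T a b c = 0 := by
  have e1 : ∑ a ∈ s, ∑ b ∈ s, ∑ c ∈ s, T a c b = ∑ a ∈ s, ∑ b ∈ s, ∑ c ∈ s, T a b c :=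
    Finset.sum_congr rfl fun a _ => Finset.sum_comm
  have e2 : ∑ a ∈ s, ∑ b ∈ s, ∑ c ∈ s, T b a c = ∑ a ∈ s, ∑ b ∈ s, ∑ c ∈ s, T a b c :=
    Finset.sum_comm
  have e3 : ∑ a ∈ s, ∑ b ∈ s, ∑ c ∈ s, T b c a = ∑ a ∈ s, ∑ b ∈ s, ∑ c ∈ s, T a b c := by
    rw [Finset.sum_comm]
    exact Finset.sum_congr rfl fun a _ => Finset.sum_comm
  have e4 : ∑ a ∈ s, ∑ b ∈ s, ∑ c ∈ s, T c a b = ∑ a ∈ s, ∑ b ∈ s, ∑ c ∈ s, T a b c := by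
    rw [← e2]
    exact Finset.sum_congr rfl fun a _ => Finset.sum_comm
  have e5 : ∑ a ∈ s, ∑ b ∈ s, ∑ c ∈ s, T c b a = ∑ a ∈ s, ∑ b ∈ s, ∑ c ∈ s, T a b c := by
    rw [← e3]
    exact Finset.sum_congr rfl fun a _ => Finset.sum_comm
  have h6 : (6 : ℂ) • ∑ a ∈ s, ∑ b ∈ s, ∑ c ∈ s, T a b c = 0 := by
    have h0 := Finset.sum_eq_zero fun a ha => Finset.sum_eq_zero fun b hb =>
      Finset.sum_eq_zero fun c hc => h a ha b hb c hc
    simp only [Finset.sum_add_distrib, e1, e2, e3, e4, e5] at h0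
    rw [← h0]
    module
  exact (smul_eq_zero.1 h6).resolve_left (by norm_num)

theorem gfun_shift (h1 h2 t : ℂ) (ht : t ≠ 0) (htp : t + h1 ≠ 0) (htm : t - h1 ≠ 0) :
    (t - h1) * (t - h2) * (t + h1 + h2) * gfun h1 h2 (t - h1) =
      (t + h1) * (t + h2) * (t - h1 - h2) * gfun h1 h2 t := by
  have : t - h1 + h1 ≠ 0 := by simpa using ht
  unfold gfun
  field_simp
  ring

theorem gfun_eq (h1 h2 t : ℂ) (ht : t ≠ 0) (htp : t + h1 ≠ 0) :
    gfun h1 h2 t = 1 - h2 * (h1 + h2) / (t * (t + h1)) := by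
  unfold gfun
  field_simp
  ring

/-- The rational identity behind the Serre relation for three distinct rows; `s`, `t` are the
successive differences of the box positions. -/
theorem gfun_serre (h1 h2 s t : ℂ) (hs : s ≠ 0) (hsp : s + h1 ≠ 0) (hsm : s - h1 ≠ 0)
    (ht : t ≠ 0) (htp : t + h1 ≠ 0) (htm : t - h1 ≠ 0)
    (hst : s + t ≠ 0) (hstp : s + t + h1 ≠ 0) (hstm : s + t - h1 ≠ 0) :
    (t - s) * (gfun h1 h2 (s - h1) * gfun h1 h2 (s + t - h1) * gfun h1 h2 (t - h1)) +
    (-s - 2 * t) * (gfun h1 h2 (s - h1) * gfun h1 h2 (s + t - h1) * gfun h1 h2 t) +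
    (2 * s + t) * (gfun h1 h2 s * gfun h1 h2 (s + t - h1) * gfun h1 h2 (t - h1)) +
    (2 * s + t) * (gfun h1 h2 (s - h1) * gfun h1 h2 (s + t) * gfun h1 h2 t) +
    (-s - 2 * t) * (gfun h1 h2 s * gfun h1 h2 (s + t) * gfun h1 h2 (t - h1)) +
    (t - s) * (gfun h1 h2 s * gfun h1 h2 (s + t) * gfun h1 h2 t) = 0 := by
  have e : ∀ z : ℂ, z ≠ 0 → z - h1 ≠ 0 →
      gfun h1 h2 (z - h1) = 1 - h2 * (h1 + h2) / (z * (z - h1)) := by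
    intro z hz hz'
    rw [gfun_eq h1 h2 _ hz' (by simpa using hz)]
    ring
  rw [e s hs hsm, e t ht htm, e _ hst hstm, gfun_eq h1 h2 s hs hsp, gfun_eq h1 h2 t ht htp,
    gfun_eq h1 h2 _ hst hstp]
  generalize h2 * (h1 + h2) = κ
  field_simp
  ring

/-- The rational identity behind the Serre relation for two boxes in one row. -/
theorem gfun_serre_repeat (h1 h2 t : ℂ) (ht : t ≠ 0) (htp : t + h1 ≠ 0) (htm : t - h1 ≠ 0)
    (htm2 : t - 2 * h1 ≠ 0) :
    (t - 2 * h1) * gfun h1 h2 (t - 2 * h1) + (h1 - 2 * t) * gfun h1 h2 (t - h1) +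
      (t + h1) * gfun h1 h2 t = 0 := by
  have : t - 2 * h1 + h1 ≠ 0 := by convert htm using 1; ring
  have : t - h1 + h1 ≠ 0 := by simpa using ht
  rw [gfun_eq h1 h2 _ ht htp, gfun_eq h1 h2 _ htm (by assumption),
    gfun_eq h1 h2 _ htm2 (by assumption)]
  generalize h2 * (h1 + h2) = κ
  field_simp
  ring

namespace StepData

variable {h1 : ℂ} (h2 : ℂ) (D : StepData h1)

/-- Exchange relation for moves in two different rows. -/
theorem coef_exchange (f : ℕ → ℤ) {a b : ℕ} (ha : a ∈ D.s) (hb : b ∈ D.s) (hab : a ≠ b) :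
    let t := D.pos f b - D.pos f a
    (t - h1) * (t - h2) * (t + h1 + h2) * (D.coef h2 f a * D.coef h2 (D.step f a) b) =
      (t + h1) * (t + h2) * (t - h1 - h2) * (D.coef h2 f b * D.coef h2 (D.step f b) a) := by
  intro t
  have ht : t ≠ 0 := by simpa using D.pos_sub_ne_zero f hab.symm 0
  have htp : t + h1 ≠ 0 := by simpa using D.pos_sub_ne_zero f hab.symm 1
  have htm : t - h1 ≠ 0 := by
    simpa [t, sub_eq_add_neg] using D.pos_sub_ne_zero f hab.symm (-1)
  have hg := gfun_shift h1 h2 t ht htp htm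
  have hg' := gfun_shift h1 h2 (-t) (neg_ne_zero.2 ht)
    (by rw [← neg_ne_zero]; ring_nf at htm ⊢; exact htm)
    (by rw [← neg_ne_zero]; ring_nf at htp ⊢; exact htp)
  obtain ⟨P, hP⟩ := D.coef_factor_one h2 f a hb hab
  obtain ⟨Q, hQ⟩ := D.coef_factor_one h2 f b ha hab.symm
  rw [hP f fun _ _ => rfl, hQ f fun _ _ => rfl, hP _ fun i hi => D.step_ne f hi,
    hQ _ fun i hi => D.step_ne f hi, pos_step_same, pos_step_same]
  have e1 : D.pos f b - (D.pos f a + h1) = t - h1 := by simp only [t]; ring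
  have e2 : D.pos f a - (D.pos f b + h1) = -t - h1 := by simp only [t]; ring
  have e3 : D.pos f a - D.pos f b = -t := by simp only [t]; ring
  have e4 : D.pos f b - D.pos f a = t := rfl
  rw [e1, e2, e3, e4]
  rcases D.total a b hab with h | h
  · rw [D.pair_of_r h2 h, D.pair_of_r h2 h, D.pair_of_r_symm h2 h, D.pair_of_r_symm h2 h]
    linear_combination (P * Q) * hg
  · rw [D.pair_of_r h2 h, D.pair_of_r h2 h, D.pair_of_r_symm h2 h, D.pair_of_r_symm h2 h]
    linear_combination (P * Q) * hg'

/-- The quadratic relation of the modes. -/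
theorem op_quadratic (i j : ℕ) (f : ℕ → ℤ) :
    (D.op h2 (i+3) (D.op h2 j (Finsupp.single f 1)) -
          D.op h2 j (D.op h2 (i+3) (Finsupp.single f 1)))
      - 3 • (D.op h2 (i+2) (D.op h2 (j+1) (Finsupp.single f 1)) -
          D.op h2 (j+1) (D.op h2 (i+2) (Finsupp.single f 1)))
      + 3 • (D.op h2 (i+1) (D.op h2 (j+2) (Finsupp.single f 1)) -
          D.op h2 (j+2) (D.op h2 (i+1) (Finsupp.single f 1)))
      - (D.op h2 i (D.op h2 (j+3) (Finsupp.single f 1)) -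
          D.op h2 (j+3) (D.op h2 i (Finsupp.single f 1)))
      + (h1*h2 + h1*(-h1-h2) + h2*(-h1-h2)) •
        ((D.op h2 (i+1) (D.op h2 j (Finsupp.single f 1)) -
          D.op h2 j (D.op h2 (i+1) (Finsupp.single f 1)))
          - (D.op h2 i (D.op h2 (j+1) (Finsupp.single f 1)) -
          D.op h2 (j+1) (D.op h2 i (Finsupp.single f 1))))
    = (h1*h2*(-h1-h2)) • (D.op h2 i (D.op h2 j (Finsupp.single f 1)) +
          D.op h2 j (D.op h2 i (Finsupp.single f 1))) := by
  simp only [op_op, ← map_sub, ← map_add, ← map_nsmul, ← map_smul]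
  rw [← sub_eq_zero, ← map_sub]
  refine sum_sum_eq_zero_of_antisymm _ _ fun a ha b hb => ?_
  rw [D.step_comm f b a, ← add_smul]
  convert zero_smul ℂ _
  simp only [Pi.sub_apply, Pi.add_apply, Pi.smul_apply, smul_eq_mul]
  simp only [nsmul_eq_mul]
  rcases eq_or_ne a b with rfl | hab
  · rw [pos_step_same]
    push_cast
    ring
  · have h := D.coef_exchange h2 f ha hb hab
    have h' := D.coef_exchange h2 f hb ha hab.symm
    rw [D.pos_step_ne f hab, D.pos_step_ne f hab.symm]
    generalize D.pos f a = x at *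
    generalize D.pos f b = y at *
    push_cast
    linear_combination y ^ i * x ^ j * h + x ^ i * y ^ j * h'

/-- The coefficient in `word₃` of the moves `a`, `b`, `c` in this order, for a function of the
Serre form. -/
def serreTerm (m : ℂ → ℂ → ℂ → ℂ) (f : ℕ → ℤ) (a b c : ℕ) : ℂ :=
  (D.pos (D.step (D.step f a) b) c - 2 * D.pos (D.step f a) b + D.pos f a) *
    m (D.pos (D.step (D.step f a) b) c) (D.pos (D.step f a) b) (D.pos f a) *
    (D.coef h2 f a * D.coef h2 (D.step f a) b * D.coef h2 (D.step (D.step f a) b) c)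

theorem serreTerm_sum_of_r (m : ℂ → ℂ → ℂ → ℂ) (h12 : ∀ x y z, m x y z = m y x z)
    (h23 : ∀ x y z, m x y z = m x z y) (f : ℕ → ℤ) {a b c : ℕ} (ha : a ∈ D.s) (hb : b ∈ D.s)
    (hc : c ∈ D.s) (rab : D.r a b) (rbc : D.r b c) :
    D.serreTerm h2 m f a b c + D.serreTerm h2 m f a c b + D.serreTerm h2 m f b a c +
      D.serreTerm h2 m f b c a + D.serreTerm h2 m f c a b + D.serreTerm h2 m f c b a = 0 := by
  have rac := D.trans _ _ _ rab rbc
  have hab : a ≠ b := fun h => D.irrefl b (h ▸ rab)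
  have hbc : b ≠ c := fun h => D.irrefl c (h ▸ rbc)
  have hac : a ≠ c := fun h => D.irrefl c (h ▸ rac)
  obtain ⟨P, hP⟩ := D.coef_factor_two h2 f a hb hc hab hac hbc
  obtain ⟨Q, hQ⟩ := D.coef_factor_two h2 f b ha hc hab.symm hbc hac
  obtain ⟨R, hR⟩ := D.coef_factor_two h2 f c ha hb hac.symm hbc.symm hab
  simp only [D.pair_of_r h2 rab, D.pair_of_r h2 rac, D.pair_of_r h2 rbc, D.pair_of_r_symm h2 rab,
    D.pair_of_r_symm h2 rac, D.pair_of_r_symm h2 rbc, mul_one] at hP hQ hR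
  have key := gfun_serre h1 h2 (D.pos f b - D.pos f a) (D.pos f c - D.pos f b)
    (by simpa using D.pos_sub_ne_zero f hab.symm 0) (by simpa using D.pos_sub_ne_zero f hab.symm 1)
    (by simpa [sub_eq_add_neg] using D.pos_sub_ne_zero f hab.symm (-1))
    (by simpa using D.pos_sub_ne_zero f hbc.symm 0) (by simpa using D.pos_sub_ne_zero f hbc.symm 1)
    (by simpa [sub_eq_add_neg] using D.pos_sub_ne_zero f hbc.symm (-1))
    (by convert D.pos_sub_ne_zero f hac.symm 0 using 1; push_cast; ring)
    (by convert D.pos_sub_ne_zero f hac.symm 1 using 1; push_cast; ring)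
    (by convert D.pos_sub_ne_zero f hac.symm (-1) using 1; push_cast; ring)
  simp only [serreTerm]
  rw [hP f fun _ _ _ => rfl, hQ f fun _ _ _ => rfl, hR f fun _ _ _ => rfl,
    hQ (D.step f a) fun i hi _ => D.step_ne f hi,
    hQ (D.step f c) fun i _ hi => D.step_ne f hi,
    hQ (D.step (D.step f a) c) fun i hi hi' => by rw [D.step_ne _ hi', D.step_ne _ hi],
    hQ (D.step (D.step f c) a) fun i hi hi' => by rw [D.step_ne _ hi, D.step_ne _ hi'],
    hR (D.step f a) fun i hi _ => D.step_ne f hi,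
    hR (D.step f b) fun i _ hi => D.step_ne f hi,
    hR (D.step (D.step f a) b) fun i hi hi' => by rw [D.step_ne _ hi', D.step_ne _ hi],
    hR (D.step (D.step f b) a) fun i hi hi' => by rw [D.step_ne _ hi, D.step_ne _ hi'],
    hP (D.step f b) fun i hi _ => D.step_ne f hi,
    hP (D.step f c) fun i _ hi => D.step_ne f hi,
    hP (D.step (D.step f b) c) fun i hi hi' => by rw [D.step_ne _ hi', D.step_ne _ hi],
    hP (D.step (D.step f c) b) fun i hi hi' => by rw [D.step_ne _ hi, D.step_ne _ hi']]
  simp only [pos_step_same, D.pos_step_ne _ hab, D.pos_step_ne _ hab.symm, D.pos_step_ne _ hac,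
    D.pos_step_ne _ hac.symm, D.pos_step_ne _ hbc, D.pos_step_ne _ hbc.symm]
  generalize D.pos f a = x at *
  generalize D.pos f b = y at *
  generalize D.pos f c = z at *
  have e1 : y - (x + h1) = y - x - h1 := by ring
  have e2 : z - (x + h1) = z - x - h1 := by ring
  have e3 : z - (y + h1) = z - y - h1 := by ring
  have e4 : y - x + (z - y) = z - x := by ring
  rw [e4] at key
  rw [e1, e2, e3, h12 y z x, h23 z y x, h12 z x y, h23 x z y, h12 y x z]
  linear_combination (P * Q * R * m x y z) * key

theorem serreTerm_sum_repeat (m : ℂ → ℂ → ℂ → ℂ) (h12 : ∀ x y z, m x y z = m y x z)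
    (h23 : ∀ x y z, m x y z = m x z y) (f : ℕ → ℤ) {a b : ℕ} (ha : a ∈ D.s) (hb : b ∈ D.s)
    (hab : a ≠ b) :
    D.serreTerm h2 m f a a b + D.serreTerm h2 m f a b a + D.serreTerm h2 m f b a a = 0 := by
  obtain ⟨P, hP⟩ := D.coef_factor_one h2 f a hb hab
  obtain ⟨P', hP'⟩ := D.coef_factor_one h2 (D.step f a) a hb hab
  obtain ⟨Q, hQ⟩ := D.coef_factor_one h2 f b ha hab.symm
  simp only [serreTerm]
  rw [hP f fun _ _ => rfl, hP (D.step f b) fun i hi => D.step_ne f hi,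
    hP' (D.step f a) fun _ _ => rfl, hP' (D.step (D.step f a) b) fun i hi => D.step_ne _ hi,
    hP' (D.step (D.step f b) a) fun i hi => by rw [D.step_comm, D.step_ne _ hi],
    hQ f fun _ _ => rfl, hQ (D.step f a) fun i hi => D.step_ne f hi,
    hQ (D.step (D.step f a) a) fun i hi => by rw [D.step_ne _ hi, D.step_ne _ hi]]
  have hne : ∀ k : ℤ, D.pos f b - D.pos f a + k * h1 ≠ 0 := D.pos_sub_ne_zero f hab.symm
  have hne' : ∀ k : ℤ, D.pos f a - D.pos f b + k * h1 ≠ 0 := D.pos_sub_ne_zero f hab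
  rcases D.total a b hab with h | h
  all_goals
    simp only [D.pair_of_r h2 h, D.pair_of_r_symm h2 h, pos_step_same, D.pos_step_ne _ hab,
      D.pos_step_ne _ hab.symm, mul_one]
    generalize D.pos f a = x at *
    generalize D.pos f b = y at *
    rw [h12 (x + h1) y x, h23 (x + h1) x y, h12 (x + h1) y x]
  · have key := gfun_serre_repeat h1 h2 (y - x) (by simpa using hne 0) (by simpa using hne 1)
      (by convert hne (-1) using 1; push_cast; ring) (by convert hne (-2) using 1; push_cast; ring)
    have e1 : y - (x + h1) = y - x - h1 := by ring
    have e2 : y - (x + h1 + h1) = y - x - 2 * h1 := by ring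
    rw [e1, e2]
    linear_combination (P * P' * Q * m y (x + h1) x) * key
  · have key := gfun_serre_repeat h1 h2 (x - y + h1) (by simpa using hne' 1)
      (by convert hne' 2 using 1; push_cast; ring) (by convert hne' 0 using 1; push_cast; ring)
      (by convert hne' (-1) using 1; push_cast; ring)
    have e1 : x - (y + h1) = x - y - h1 := by ring
    have e2 : x - y + h1 - h1 = x - y := by ring
    have e3 : x - y + h1 - 2 * h1 = x - y - h1 := by ring
    have e4 : x + h1 - (y + h1) = x - y := by ring
    have e5 : x + h1 - y = x - y + h1 := by ring
    rw [e2, e3] at key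
    rw [e1, e4, e5]
    linear_combination (-P * P' * Q * gfun h1 h2 (x - y) * m y (x + h1) x) * key

theorem serreTerm_sum (m : ℂ → ℂ → ℂ → ℂ) (h12 : ∀ x y z, m x y z = m y x z)
    (h23 : ∀ x y z, m x y z = m x z y) (f : ℕ → ℤ) {a b c : ℕ} (ha : a ∈ D.s) (hb : b ∈ D.s)
    (hc : c ∈ D.s) :
    D.serreTerm h2 m f a b c + D.serreTerm h2 m f a c b + D.serreTerm h2 m f b a c +
      D.serreTerm h2 m f b c a + D.serreTerm h2 m f c a b + D.serreTerm h2 m f c b a = 0 := by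
  rcases eq_or_ne a b with rfl | hab
  · rcases eq_or_ne a c with rfl | hac
    · have : D.serreTerm h2 m f a a a = 0 := by
        simp only [serreTerm, pos_step_same]
        ring
      simp only [this, add_zero]
    · linear_combination 2 * D.serreTerm_sum_repeat h2 m h12 h23 f ha hc hac
  rcases eq_or_ne a c with rfl | hac
  · linear_combination 2 * D.serreTerm_sum_repeat h2 m h12 h23 f ha hb hab
  rcases eq_or_ne b c with rfl | hbc
  · linear_combination 2 * D.serreTerm_sum_repeat h2 m h12 h23 f hb ha hab.symm
  have H := @serreTerm_sum_of_r h1 h2 D m h12 h23 f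
  rcases D.total a b hab with h | h <;> rcases D.total b c hbc with h' | h' <;>
    rcases D.total a c hac with h'' | h''
  · linear_combination H ha hb hc h h'
  · exact absurd (D.trans _ _ _ h h') (D.asymm h'')
  · linear_combination H ha hc hb h'' h'
  · linear_combination H hc ha hb h'' h
  · linear_combination H hb ha hc h h''
  · linear_combination H hb hc ha h' h''
  · exact absurd (D.trans _ _ _ h' h) (D.asymm h'')
  · linear_combination H hc hb ha h' h

/-- The cubic relation of the modes in symmetrised form. -/
theorem word₃_eq_zero (f : ℕ → ℤ) (m : ℂ → ℂ → ℂ → ℂ) (h12 : ∀ x y z, m x y z = m y x z)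
    (h23 : ∀ x y z, m x y z = m x z y) :
    D.word₃ h2 f (fun z w v => (z - 2 * w + v) * m z w v) = 0 := by
  refine sum_sum_sum_eq_zero_of_symm _ _ fun a ha b hb c hc => ?_
  have e : ∀ i j k, D.step (D.step (D.step f i) j) k =
      f + Pi.single i D.sgn + Pi.single j D.sgn + Pi.single k D.sgn := fun _ _ _ => rfl
  have e1 : D.step (D.step (D.step f a) c) b = D.step (D.step (D.step f a) b) c := by
    simp only [e]; abel
  have e2 : D.step (D.step (D.step f b) a) c = D.step (D.step (D.step f a) b) c := by
    simp only [e]; abel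
  have e3 : D.step (D.step (D.step f b) c) a = D.step (D.step (D.step f a) b) c := by
    simp only [e]; abel
  have e4 : D.step (D.step (D.step f c) a) b = D.step (D.step (D.step f a) b) c := by
    simp only [e]; abel
  have e5 : D.step (D.step (D.step f c) b) a = D.step (D.step (D.step f a) b) c := by
    simp only [e]; abel
  have h := D.serreTerm_sum h2 m h12 h23 f ha hb hc
  simp only [serreTerm] at h
  simp only [← add_smul, e1, e2, e3, e4, e5]
  rw [h, zero_smul]

theorem sum_perm_fin_three {M : Type*} [AddCommMonoid M] (F : Fin 3 → Fin 3 → Fin 3 → M) :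
    ∑ σ : Equiv.Perm (Fin 3), F (σ 0) (σ 1) (σ 2) =
      F 0 1 2 + F 0 2 1 + F 1 0 2 + F 1 2 0 + F 2 0 1 + F 2 1 0 := by
  have h : (Finset.univ : Finset (Equiv.Perm (Fin 3))) = {1, Equiv.swap 1 2, Equiv.swap 0 1,
      finRotate 3, (finRotate 3)⁻¹, Equiv.swap 0 2} := by decide
  rw [h, Finset.sum_insert (by decide), Finset.sum_insert (by decide),
    Finset.sum_insert (by decide), Finset.sum_insert (by decide), Finset.sum_insert (by decide),
    Finset.sum_singleton]
  simp only [add_assoc]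
  rfl

/-- The Serre relation of the modes. -/
theorem op_serre (i : Fin 3 → ℕ) (f : ℕ → ℤ) :
    ∑ σ : Equiv.Perm (Fin 3),
      ((D.op h2 (i (σ 0)) (D.op h2 (i (σ 1)) (D.op h2 (i (σ 2) + 1) (Finsupp.single f 1)))
          - D.op h2 (i (σ 0)) (D.op h2 (i (σ 2) + 1) (D.op h2 (i (σ 1)) (Finsupp.single f 1))))
        - (D.op h2 (i (σ 1)) (D.op h2 (i (σ 2) + 1) (D.op h2 (i (σ 0)) (Finsupp.single f 1)))
          - D.op h2 (i (σ 2) + 1) (D.op h2 (i (σ 1)) (D.op h2 (i (σ 0)) (Finsupp.single f 1)))))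
      = 0 := by
  simp only [op_op_op, ← map_sub, ← map_sum]
  rw [← D.word₃_eq_zero h2 f (fun z w v => ∑ σ : Equiv.Perm (Fin 3),
    z ^ i (σ 0) * w ^ i (σ 1) * v ^ i (σ 2))]
  · congr 1
    funext z w v
    simp only [Finset.sum_apply, Pi.sub_apply]
    rw [sum_perm_fin_three fun a b c => z ^ i a * w ^ i b * v ^ i c,
      sum_perm_fin_three fun a b c => z ^ i a * w ^ i b * v ^ (i c + 1) -
        z ^ i a * w ^ (i c + 1) * v ^ i b -
        (z ^ i b * w ^ (i c + 1) * v ^ i a - z ^ (i c + 1) * w ^ i b * v ^ i a)]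
    ring
  · intro x y z
    rw [sum_perm_fin_three fun a b c => x ^ i a * y ^ i b * z ^ i c,
      sum_perm_fin_three fun a b c => y ^ i a * x ^ i b * z ^ i c]
    ring
  · intro x y z
    rw [sum_perm_fin_three fun a b c => x ^ i a * y ^ i b * z ^ i c,
      sum_perm_fin_three fun a b c => x ^ i a * z ^ i b * y ^ i c]
    ring

end StepData

theorem gfun_reflect (h1 h2 t : ℂ) : gfun h1 h2 (-t - h1) = gfun h1 h2 t := by
  unfold gfun
  congr 1 <;> ring

namespace FockLattice

variable {h1 h2 : ℂ} (u : ℂ)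
  (hgen : ∀ a b : ℤ, ¬(a = 0 ∧ b = 0) → (a : ℂ) * h1 + (b : ℂ) * h2 ≠ 0) (N : ℕ)

/-- The box-adding data on sequences, truncated to the first `N` rows. -/
def up : StepData h1 where
  r := (· < ·)
  dec := inferInstance
  irrefl := lt_irrefl
  total _ _ h := lt_or_gt_of_ne h
  trans _ _ _ := lt_trans
  sgn := 1
  sgn_sq := rfl
  base i := i * h2 + u
  own _ _ := 1 / h1
  s := Finset.range N
  sep i p h k := by
    convert hgen k ((i : ℤ) - p) (by omega) using 1
    push_cast
    ring

/-- The box-removing data on sequences, truncated to the first `N` rows. -/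
def down : StepData h1 where
  r := (· > ·)
  dec := inferInstance
  irrefl := lt_irrefl
  total _ _ h := (lt_or_gt_of_ne h).symm
  trans _ _ _ h h' := lt_trans h' h
  sgn := -1
  sgn_sq := rfl
  base i := h1 - (i * h2 + u)
  own i n := -(1 / h1) * ((N * h2 + u - h2 - (n * h1 + i * h2 + u)) /
    (N * h2 + u - (n * h1 + i * h2 + u) + h1))
  s := Finset.range N
  sep i p h k := by
    convert hgen k ((p : ℤ) - i) (by omega) using 1
    push_cast
    ring

/-- The position of the next box in row `i`. -/
def xpos (h1 h2 : ℂ) (f : ℕ → ℤ) (i : ℕ) : ℂ := f i * h1 + i * h2 + u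

theorem up_pos (f : ℕ → ℤ) (i : ℕ) : (up u hgen N).pos f i = xpos u h1 h2 f i := by
  simp [up, StepData.pos, xpos]; ring

theorem down_pos (f : ℕ → ℤ) (i : ℕ) : (down u hgen N).pos f i = h1 - xpos u h1 h2 f i := by
  simp [down, StepData.pos, xpos]; ring

theorem down_step_up_step (f : ℕ → ℤ) (a b : ℕ) :
    (down u hgen N).step ((up u hgen N).step f a) b =
      (up u hgen N).step ((down u hgen N).step f b) a := by
  simp only [StepData.step]; abel

theorem up_step_down_step (f : ℕ → ℤ) (a : ℕ) :
    (up u hgen N).step ((down u hgen N).step f a) a = f := by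
  funext i
  simp only [StepData.step, up, down, Pi.add_apply, Pi.single_apply]
  split_ifs <;> ring

theorem xpos_up_step_same (f : ℕ → ℤ) (a : ℕ) :
    xpos u h1 h2 ((up u hgen N).step f a) a = xpos u h1 h2 f a + h1 := by
  rw [← up_pos u hgen N, StepData.pos_step_same, up_pos]

theorem xpos_up_step_ne (f : ℕ → ℤ) {a b : ℕ} (h : b ≠ a) :
    xpos u h1 h2 ((up u hgen N).step f a) b = xpos u h1 h2 f b := by
  rw [← up_pos u hgen N, StepData.pos_step_ne _ _ h, up_pos]

theorem xpos_down_step_same (f : ℕ → ℤ) (a : ℕ) :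
    xpos u h1 h2 ((down u hgen N).step f a) a = xpos u h1 h2 f a - h1 := by
  rw [eq_sub_iff_add_eq, ← xpos_up_step_same u hgen N, up_step_down_step]

theorem xpos_down_step_ne (f : ℕ → ℤ) {a b : ℕ} (h : b ≠ a) :
    xpos u h1 h2 ((down u hgen N).step f a) b = xpos u h1 h2 f b := by
  simp only [xpos, StepData.step_ne _ _ h]

theorem coef_up_down_comm (f : ℕ → ℤ) {a b : ℕ} (ha : a ∈ Finset.range N)
    (hb : b ∈ Finset.range N) (hab : a ≠ b) :
    (down u hgen N).coef h2 f b * (up u hgen N).coef h2 ((down u hgen N).step f b) a =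
      (up u hgen N).coef h2 f a * (down u hgen N).coef h2 ((up u hgen N).step f a) b := by
  obtain ⟨P, hP⟩ := (up u hgen N).coef_factor_one h2 f a hb hab
  obtain ⟨Q, hQ⟩ := (down u hgen N).coef_factor_one h2 f b ha hab.symm
  rw [hP f fun _ _ => rfl, hQ f fun _ _ => rfl,
    hP _ fun i hi => (down u hgen N).step_ne f hi, hQ _ fun i hi => (up u hgen N).step_ne f hi]
  simp only [up_pos, down_pos, xpos_up_step_same, xpos_down_step_same]
  have hp : ∀ t, (up u hgen N).pair h2 b a t = (down u hgen N).pair h2 a b t := fun t => rfl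
  have e1 : h1 - xpos u h1 h2 f b - (h1 - xpos u h1 h2 f a) =
    xpos u h1 h2 f a - xpos u h1 h2 f b := by ring
  have e2 : h1 - xpos u h1 h2 f b - (h1 - (xpos u h1 h2 f a + h1)) =
    xpos u h1 h2 f a - (xpos u h1 h2 f b - h1) := by ring
  rw [hp, hp, e1, e2]
  ring

/-- The product of the structure functions over all rows but `i`, evaluated at `z`. -/
def weight (h1 h2 : ℂ) (f : ℕ → ℤ) (i : ℕ) (z : ℂ) : ℂ :=
  (z - (N * h2 + u) + h1 + h2) / (z - (N * h2 + u)) *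
    ∏ p ∈ (Finset.range N).erase i, gfun h1 h2 (z - xpos u h1 h2 f p)

theorem weight_congr {f f' : ℕ → ℤ} {i : ℕ} (h : ∀ p, p ≠ i → f' p = f p) (z : ℂ) :
    weight u N h1 h2 f' i z = weight u N h1 h2 f i z := by
  unfold weight xpos
  congr 1
  exact Finset.prod_congr rfl fun p hp => by rw [h p (Finset.ne_of_mem_erase hp)]

theorem coef_up_mul_coef_down (f : ℕ → ℤ) {i : ℕ} (hi : i ∈ Finset.range N) :
    (up u hgen N).coef h2 f i * (down u hgen N).coef h2 ((up u hgen N).step f i) i =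
      -(1 / h1 ^ 2) * weight u N h1 h2 f i (xpos u h1 h2 f i) := by
  have hprod : ∀ p ∈ (Finset.range N).erase i,
      (up u hgen N).pair h2 p i (xpos u h1 h2 f i - xpos u h1 h2 f p) *
        (down u hgen N).pair h2 p i (h1 - xpos u h1 h2 ((up u hgen N).step f i) i -
          (h1 - xpos u h1 h2 ((up u hgen N).step f i) p)) =
      gfun h1 h2 (xpos u h1 h2 f i - xpos u h1 h2 f p) := by
    intro p hp
    have hpi := Finset.ne_of_mem_erase hp
    rw [xpos_up_step_same, xpos_up_step_ne u hgen N f hpi]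
    have e : h1 - (xpos u h1 h2 f i + h1) - (h1 - xpos u h1 h2 f p) =
      -(xpos u h1 h2 f i - xpos u h1 h2 f p) - h1 := by ring
    rw [e]
    rcases lt_or_gt_of_ne hpi with h | h
    · rw [StepData.pair_of_r h2 (up u hgen N) h, StepData.pair_of_r_symm h2 (down u hgen N) h,
        mul_one]
    · rw [StepData.pair_of_r h2 (down u hgen N) h, StepData.pair_of_r_symm h2 (up u hgen N) h,
        one_mul, gfun_reflect]
  have hown : (down u hgen N).own i ((up u hgen N).step f i i) = -(1 / h1) *
      ((xpos u h1 h2 f i - (N * h2 + u) + h1 + h2) / (xpos u h1 h2 f i - (N * h2 + u))) := by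
    rw [StepData.step_same]
    simp only [down, up, xpos]
    congr 1
    rw [← neg_div_neg_eq]
    push_cast
    congr 1 <;> ring
  unfold weight
  rw [← Finset.prod_congr rfl hprod, Finset.prod_mul_distrib]
  unfold StepData.coef
  have hs : (up u hgen N).s = Finset.range N := rfl
  have hs' : (down u hgen N).s = Finset.range N := rfl
  rw [hs, hs', hown, ← Finset.mul_prod_erase _ _ hi, ← Finset.mul_prod_erase _ _ hi]
  simp only [up_pos, down_pos]
  have h1' : ∀ t, (up u hgen N).pair h2 i i t = 1 := fun t => if_neg (lt_irrefl i)
  have h2' : ∀ t, (down u hgen N).pair h2 i i t = 1 := fun t => if_neg (lt_irrefl i)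
  have h3' : (up u hgen N).own i (f i) = 1 / h1 := rfl
  rw [h1', h2', h3']
  ring

/-- The functional on functions of one variable whose value on `z ^ k` is the eigenvalue
of `ψ_k`. -/
def resid (h1 h2 : ℂ) (f : ℕ → ℤ) : (ℂ → ℂ) →ₗ[ℂ] ℂ where
  toFun φ := 1 / h1 ^ 2 * ∑ i ∈ Finset.range N,
    (weight u N h1 h2 f i (xpos u h1 h2 f i) * φ (xpos u h1 h2 f i) -
      weight u N h1 h2 f i (xpos u h1 h2 f i - h1) * φ (xpos u h1 h2 f i - h1))
  map_add' φ φ' := by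
    simp only [Pi.add_apply, Finset.mul_sum, ← Finset.sum_add_distrib]
    exact Finset.sum_congr rfl fun i _ => by ring
  map_smul' c φ := by
    simp only [Pi.smul_apply, smul_eq_mul, RingHom.id_apply, Finset.mul_sum]
    exact Finset.sum_congr rfl fun i _ => by ring

theorem up_down_commutator (i j : ℕ) (f : ℕ → ℤ) :
    (up u hgen N).op h2 i ((down u hgen N).op h2 j (Finsupp.single f 1)) -
      (down u hgen N).op h2 j ((up u hgen N).op h2 i (Finsupp.single f 1)) =
    ((-1) ^ j * resid u N h1 h2 f fun z => z ^ (i + j)) • (Finsupp.single f 1 : LatSp) := by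
  simp only [StepData.op_single, map_sum, one_mul]
  have hs : (up u hgen N).s = Finset.range N := rfl
  have hs' : (down u hgen N).s = Finset.range N := rfl
  rw [hs, hs']
  conv_lhs => arg 2; rw [Finset.sum_comm]
  rw [← Finset.sum_sub_distrib, resid]
  simp only [LinearMap.coe_mk, AddHom.coe_mk]
  rw [Finset.mul_sum, Finset.mul_sum, Finset.sum_smul]
  refine Finset.sum_congr rfl fun b hb => ?_
  rw [← Finset.sum_sub_distrib, Finset.sum_eq_single_of_mem b hb]
  · have hd := coef_up_mul_coef_down u hgen N ((down u hgen N).step f b) hb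
    rw [weight_congr u N fun p hp => (down u hgen N).step_ne f hp, up_step_down_step,
      xpos_down_step_same] at hd
    rw [down_step_up_step, up_step_down_step, ← Finsupp.single_sub, Finsupp.smul_single,
      smul_eq_mul, mul_one]
    congr 1
    simp only [up_pos, down_pos, xpos_down_step_same, xpos_up_step_same]
    have e1 : (h1 - xpos u h1 h2 f b) ^ j = (-1) ^ j * (xpos u h1 h2 f b - h1) ^ j := by
      rw [← mul_pow]; congr 1; ring
    have e2 : (h1 - (xpos u h1 h2 f b + h1)) ^ j = (-1) ^ j * xpos u h1 h2 f b ^ j := by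
      rw [← mul_pow]; congr 1; ring
    rw [e1, e2, pow_add, pow_add]
    linear_combination ((-1) ^ j * (xpos u h1 h2 f b - h1) ^ j * (xpos u h1 h2 f b - h1) ^ i) * hd -
      ((-1) ^ j * (xpos u h1 h2 f b) ^ j * (xpos u h1 h2 f b) ^ i) *
        coef_up_mul_coef_down u hgen N f hb
  · intro a ha hab
    rw [down_step_up_step, ← Finsupp.single_sub]
    rw [← Finsupp.single_zero]
    congr 1
    have h := coef_up_down_comm u hgen N f ha hb hab
    simp only [up_pos, down_pos, xpos_down_step_ne u hgen N f hab,
      xpos_up_step_ne u hgen N f hab.symm]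
    linear_combination ((h1 - xpos u h1 h2 f b) ^ j * (xpos u h1 h2 f a) ^ i) * h

theorem xpos_sub_ne_zero
    (hgen : ∀ a b : ℤ, ¬(a = 0 ∧ b = 0) → (a : ℂ) * h1 + (b : ℂ) * h2 ≠ 0)
    (f : ℕ → ℤ) {i p : ℕ} (h : i ≠ p) (k : ℤ) :
    xpos u h1 h2 f i - xpos u h1 h2 f p + k * h1 ≠ 0 := by
  rw [← up_pos u hgen 0, ← up_pos u hgen 0]
  exact StepData.pos_sub_ne_zero _ f h k

/-- The part of `weight` that does not involve row `a`. -/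
def restWeight (h1 h2 : ℂ) (f : ℕ → ℤ) (a i : ℕ) (z : ℂ) : ℂ :=
  (z - (N * h2 + u) + h1 + h2) / (z - (N * h2 + u)) *
    ∏ p ∈ ((Finset.range N).erase i).erase a, gfun h1 h2 (z - xpos u h1 h2 f p)

theorem weight_up_step (f : ℕ → ℤ) {a i : ℕ} (ha : a ∈ Finset.range N) (h : i ≠ a) (z : ℂ) :
    weight u N h1 h2 f i z =
      restWeight u N h1 h2 f a i z * gfun h1 h2 (z - xpos u h1 h2 f a) ∧
    weight u N h1 h2 ((up u hgen N).step f a) i z =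
      restWeight u N h1 h2 f a i z * gfun h1 h2 (z - xpos u h1 h2 f a - h1) := by
  have hm : a ∈ (Finset.range N).erase i := Finset.mem_erase.2 ⟨h.symm, ha⟩
  have hp : ∏ p ∈ ((Finset.range N).erase i).erase a,
      gfun h1 h2 (z - xpos u h1 h2 ((up u hgen N).step f a) p) =
      ∏ p ∈ ((Finset.range N).erase i).erase a, gfun h1 h2 (z - xpos u h1 h2 f p) :=
    Finset.prod_congr rfl fun p hp => by
      rw [xpos_up_step_ne u hgen N f (Finset.ne_of_mem_erase hp)]
  unfold weight restWeight
  rw [← Finset.mul_prod_erase _ _ hm, ← Finset.mul_prod_erase _ _ hm, hp, xpos_up_step_same,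
    ← sub_sub z (xpos u h1 h2 f a)]
  constructor <;> ring

theorem resid_up_step (f : ℕ → ℤ) {a : ℕ} (ha : a ∈ Finset.range N) (φ : ℂ → ℂ) :
    let x := xpos u h1 h2 f a
    resid u N h1 h2 ((up u hgen N).step f a)
        (fun z => (z - x - h1) * (z - x - h2) * (z - x + h1 + h2) * φ z) =
      resid u N h1 h2 f (fun z => (z - x + h1) * (z - x + h2) * (z - x - h1 - h2) * φ z) := by
  intro x
  simp only [resid, LinearMap.coe_mk, AddHom.coe_mk]
  congr 1
  refine Finset.sum_congr rfl fun i _ => ?_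
  rcases eq_or_ne i a with rfl | hia
  · rw [weight_congr u N fun p hp => (up u hgen N).step_ne f hp,
      weight_congr u N fun p hp => (up u hgen N).step_ne f hp, xpos_up_step_same]
    have e : xpos u h1 h2 f i + h1 - h1 = xpos u h1 h2 f i := by ring
    rw [e]
    simp only [x]
    ring
  · have hQ := weight_up_step u hgen N f ha hia
    set Q := restWeight u N h1 h2 f a i
    rw [xpos_up_step_ne u hgen N f hia, (hQ _).1, (hQ _).1, (hQ _).2, (hQ _).2]
    have hne : ∀ k : ℤ, xpos u h1 h2 f i - x + k * h1 ≠ 0 := xpos_sub_ne_zero u hgen f hia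
    have g1 := gfun_shift h1 h2 (xpos u h1 h2 f i - x) (by simpa using hne 0)
      (by simpa using hne 1) (by simpa [sub_eq_add_neg] using hne (-1))
    have g2 := gfun_shift h1 h2 (xpos u h1 h2 f i - h1 - x)
      (by convert hne (-1) using 1; push_cast; ring) (by convert hne 0 using 1; push_cast; ring)
      (by convert hne (-2) using 1; push_cast; ring)
    linear_combination Q (xpos u h1 h2 f i) * φ (xpos u h1 h2 f i) * g1 -
      Q (xpos u h1 h2 f i - h1) * φ (xpos u h1 h2 f i - h1) * g2

/-- The eigenvalue of `ψ_k` at a sequence. -/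
def psiVal (h1 h2 : ℂ) (k : ℕ) (f : ℕ → ℤ) : ℂ := resid u N h1 h2 f fun z => z ^ k

theorem resid_cubic (f : ℕ → ℤ) (x s2 s3 : ℂ) (i : ℕ) :
    resid u N h1 h2 f (fun z => ((z - x) ^ 3 + s2 * (z - x) + s3) * z ^ i) =
      psiVal u N h1 h2 (i + 3) f - 3 * x * psiVal u N h1 h2 (i + 2) f +
        (3 * x ^ 2 + s2) * psiVal u N h1 h2 (i + 1) f +
        (s3 - x ^ 3 - s2 * x) * psiVal u N h1 h2 i f := by
  simp only [psiVal, ← smul_eq_mul (a := 3 * x), ← smul_eq_mul (a := 3 * x ^ 2 + s2),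
    ← smul_eq_mul (a := s3 - x ^ 3 - s2 * x), ← map_smul, ← map_sub, ← map_add]
  congr 1
  funext z
  simp only [Pi.add_apply, Pi.sub_apply, Pi.smul_apply, smul_eq_mul]
  ring

theorem psiVal_up_step (f : ℕ → ℤ) {a : ℕ} (ha : a ∈ Finset.range N) (i : ℕ) :
    let x := xpos u h1 h2 f a
    let P := fun k => psiVal u N h1 h2 k ((up u hgen N).step f a)
    let R := fun k => psiVal u N h1 h2 k f
    (P (i + 3) - R (i + 3)) - 3 * x * (P (i + 2) - R (i + 2)) +
      3 * x ^ 2 * (P (i + 1) - R (i + 1)) - x ^ 3 * (P i - R i) +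
      (h1*h2 + h1*(-h1-h2) + h2*(-h1-h2)) * ((P (i + 1) - R (i + 1)) - x * (P i - R i)) =
    (h1*h2*(-h1-h2)) * (P i + R i) := by
  intro x P R
  have h := resid_up_step u hgen N f ha fun z => z ^ i
  have c1 := resid_cubic (h1 := h1) (h2 := h2) u N ((up u hgen N).step f a) x
    (h1*h2 + h1*(-h1-h2) + h2*(-h1-h2)) (-(h1*h2*(-h1-h2))) i
  have c2 := resid_cubic (h1 := h1) (h2 := h2) u N f x
    (h1*h2 + h1*(-h1-h2) + h2*(-h1-h2)) (h1*h2*(-h1-h2)) i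
  have e1 : ∀ z : ℂ, (z - x - h1) * (z - x - h2) * (z - x + h1 + h2) =
    (z - x) ^ 3 + (h1*h2 + h1*(-h1-h2) + h2*(-h1-h2)) * (z - x) + -(h1*h2*(-h1-h2)) := by
    intro z; ring
  have e2 : ∀ z : ℂ, (z - x + h1) * (z - x + h2) * (z - x - h1 - h2) =
    (z - x) ^ 3 + (h1*h2 + h1*(-h1-h2) + h2*(-h1-h2)) * (z - x) + h1*h2*(-h1-h2) := by
    intro z; ring
  have h' := h
  simp only [] at h'
  simp only [x] at e1 e2 c1 c2
  simp only [e1, e2] at h'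
  rw [c1, c2] at h'
  simp only [P, R, x]
  linear_combination h'

theorem _root_.gfun_sub_gfun (h1 h2 t : ℂ) (h : t ≠ 0) (hm : t - h1 ≠ 0) (hp : t + h1 ≠ 0) :
    gfun h1 h2 (t - h1) - gfun h1 h2 t =
      -2 * (h1 * h2 * (h1 + h2)) / (t * (t - h1) * (t + h1)) := by
  unfold gfun
  have e : t - h1 + h1 = t := by ring
  rw [e]
  field_simp
  ring

theorem _root_.prod_gfun {ι : Type*} (h1 h2 : ℂ) (s : Finset ι) (t : ι → ℂ) :
    ∏ i ∈ s, gfun h1 h2 (t i) =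
      (∏ i ∈ s, (t i - h2) * (t i + h1 + h2)) / ((∏ i ∈ s, t i) * ∏ i ∈ s, (t i + h1)) := by
  simp only [gfun, Finset.prod_div_distrib, Finset.prod_mul_distrib]

/-- The polynomial whose divided difference over `diffNode` gives the change of `psiVal`
under adding a box to row `a`. -/
def diffPoly (h1 h2 : ℂ) (f : ℕ → ℤ) (a : ℕ) : Polynomial ℂ :=
  (Polynomial.X - Polynomial.C ((N * h2 + u) - h1 - h2)) * ∏ p ∈ (Finset.range N).erase a,
    ((Polynomial.X - Polynomial.C (xpos u h1 h2 f p + h2)) *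
      (Polynomial.X - Polynomial.C (xpos u h1 h2 f p - h1 - h2)))

theorem diffPoly_monic (f : ℕ → ℤ) (a : ℕ) : (diffPoly u N h1 h2 f a).Monic :=
  (Polynomial.monic_X_sub_C _).mul <| Polynomial.monic_prod_of_monic _ _ fun _ _ =>
    (Polynomial.monic_X_sub_C _).mul (Polynomial.monic_X_sub_C _)

theorem diffPoly_natDegree (f : ℕ → ℤ) {a : ℕ} (ha : a ∈ Finset.range N) :
    (diffPoly u N h1 h2 f a).natDegree + 1 = 2 * N := by
  have hm : ∀ p ∈ (Finset.range N).erase a,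
      ((Polynomial.X - Polynomial.C (xpos u h1 h2 f p + h2)) *
      (Polynomial.X - Polynomial.C (xpos u h1 h2 f p - h1 - h2))).Monic := fun _ _ =>
    (Polynomial.monic_X_sub_C _).mul (Polynomial.monic_X_sub_C _)
  unfold diffPoly
  rw [(Polynomial.monic_X_sub_C _).natDegree_mul (Polynomial.monic_prod_of_monic _ _ hm),
    Polynomial.natDegree_prod_of_monic _ _ hm]
  simp only [(Polynomial.monic_X_sub_C _).natDegree_mul (Polynomial.monic_X_sub_C _),
    Polynomial.natDegree_X_sub_C, Finset.sum_const, Finset.card_erase_of_mem ha,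
    Finset.card_range, smul_eq_mul]
  have := Finset.mem_range.1 ha
  omega

/-- The nodes: the poles in all rows, the boundary pole, and the pole created by the new box. -/
def diffNode (h1 h2 : ℂ) (f : ℕ → ℤ) (a : ℕ) : ℕ ⊕ ℕ ⊕ Bool → ℂ
  | .inl i => xpos u h1 h2 f i
  | .inr (.inl i) => xpos u h1 h2 f i - h1
  | .inr (.inr true) => N * h2 + u
  | .inr (.inr false) => xpos u h1 h2 f a + h1

/-- The index set of `diffNode`. -/
def diffIndex : Finset (ℕ ⊕ ℕ ⊕ Bool) :=
  (Finset.range N).disjSum ((Finset.range N).disjSum Finset.univ)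

theorem lattice_point_injective
    (hgen : ∀ a b : ℤ, ¬(a = 0 ∧ b = 0) → (a : ℂ) * h1 + (b : ℂ) * h2 ≠ 0) {m n m' n' : ℤ}
    (h : (m : ℂ) * h1 + n * h2 = m' * h1 + n' * h2) : m = m' ∧ n = n' := by
  by_contra hne
  refine hgen (m - m') (n - n') (by omega) ?_
  push_cast
  linear_combination h

theorem diffNode_injOn
    (hgen : ∀ a b : ℤ, ¬(a = 0 ∧ b = 0) → (a : ℂ) * h1 + (b : ℂ) * h2 ≠ 0)
    (f : ℕ → ℤ) {a : ℕ} (ha : a ∈ Finset.range N) :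
    Set.InjOn (diffNode u N h1 h2 f a) (diffIndex N) := by
  have hN := Finset.mem_range.1 ha
  let row : ℕ ⊕ ℕ ⊕ Bool → ℤ
    | .inl i => f i
    | .inr (.inl i) => f i - 1
    | .inr (.inr true) => 0
    | .inr (.inr false) => f a + 1
  let col : ℕ ⊕ ℕ ⊕ Bool → ℕ
    | .inl i => i
    | .inr (.inl i) => i
    | .inr (.inr true) => N
    | .inr (.inr false) => a
  have hv : ∀ n, diffNode u N h1 h2 f a n = ((row n : ℂ) * h1 + ((col n : ℤ) : ℂ) * h2) + u := by
    rintro (i | i | _ | _) <;> simp only [diffNode, xpos, row, col] <;> push_cast <;> ring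
  intro n hn n' hn' h
  rw [hv, hv, add_left_inj] at h
  obtain ⟨h1', h2'⟩ := lattice_point_injective hgen h
  rcases n with i | i | _ | _ <;> rcases n' with j | j | _ | _ <;>
    simp [row, col, diffIndex] at h1' h2' hn hn' ⊢ <;>
    first | omega | (subst h2'; omega)

/-- The change of `psiVal` under adding a box, in terms of divided differences. -/
theorem psiVal_up_step_sub (f : ℕ → ℤ) {a : ℕ} (ha : a ∈ Finset.range N) (haN : a + 1 ≠ N)
    (hf : f (N - 1) = 0) (k : ℕ) (hk : k ≤ 2) :
    psiVal u N h1 h2 k ((up u hgen N).step f a) - psiVal u N h1 h2 k f =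
      2 * (diffPoly u N h1 h2 f a * Polynomial.X ^ k).coeff (2 * N + 1) := by
  have hN := Finset.mem_range.1 ha
  have hcard : (diffIndex N).card = 2 * N + 2 := by
    simp [diffIndex]; ring
  have hdeg : (diffPoly u N h1 h2 f a * Polynomial.X ^ k).degree <
      ((diffIndex N).card : WithBot ℕ) := by
    rw [hcard, ← Polynomial.natDegree_lt_iff_degree_lt
      ((diffPoly_monic u N f a).mul (Polynomial.monic_X_pow k)).ne_zero,
      (diffPoly_monic u N f a).natDegree_mul (Polynomial.monic_X_pow k), Polynomial.natDegree_X_pow]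
    have := diffPoly_natDegree (h1 := h1) (h2 := h2) u N f ha
    omega
  have key := Lagrange.coeff_eq_sum (diffNode_injOn u N hgen f ha) hdeg
  rw [hcard, show 2 * N + 2 - 1 = 2 * N + 1 by omega] at key
  rw [key, diffIndex, Finset.sum_disjSum, Finset.sum_disjSum, Fintype.sum_bool]
  have erase_inl : ∀ i, (diffIndex N).erase (.inl i) =
      ((Finset.range N).erase i).disjSum ((Finset.range N).disjSum Finset.univ) := by
    intro i; ext x; rcases x with j | j | j <;> simp [diffIndex]
  have erase_inr : ∀ i, (diffIndex N).erase (.inr (.inl i)) =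
      (Finset.range N).disjSum (((Finset.range N).erase i).disjSum Finset.univ) := by
    intro i; ext x; rcases x with j | j | j <;> simp [diffIndex]
  have erase_false : (diffIndex N).erase (.inr (.inr false)) =
      (Finset.range N).disjSum ((Finset.range N).disjSum {true}) := by
    ext x; rcases x with j | j | j <;> simp [diffIndex]
  have eval_poly : ∀ z, (diffPoly u N h1 h2 f a * Polynomial.X ^ k).eval z =
      (z - (N * h2 + u) + h1 + h2) * (∏ p ∈ (Finset.range N).erase a,
        (z - xpos u h1 h2 f p - h2) * (z - xpos u h1 h2 f p + h1 + h2)) * z ^ k := by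
    intro z
    simp only [diffPoly, Polynomial.eval_mul, Polynomial.eval_prod, Polynomial.eval_sub,
      Polynomial.eval_X, Polynomial.eval_C, Polynomial.eval_pow]
    congr 2
    · ring
    · exact Finset.prod_congr rfl fun p _ => by ring
  have hbd : (diffPoly u N h1 h2 f a * Polynomial.X ^ k).eval
      (diffNode u N h1 h2 f a (.inr (.inr true))) = 0 := by
    have hm : N - 1 ∈ (Finset.range N).erase a :=
      Finset.mem_erase.2 ⟨by omega, Finset.mem_range.2 (by omega)⟩
    rw [eval_poly, Finset.prod_eq_zero hm, mul_zero, zero_mul]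
    simp only [diffNode, xpos, hf]
    rw [Nat.cast_sub (by omega)]
    push_cast
    ring
  rw [← diffIndex, hbd, zero_div, zero_add, erase_false, Finset.prod_disjSum, Finset.prod_disjSum,
    Finset.prod_singleton]
  simp only [erase_inl, erase_inr, Finset.prod_disjSum, Fintype.prod_bool, eval_poly]
  simp only [diffNode]
  simp only [← sub_add]
  have hane : ∀ {i : ℕ}, i ∈ (Finset.range N).erase a →
      a ∈ (Finset.range N).erase i ∧ i ∈ Finset.range N ∧ i ≠ a := fun hi =>
    ⟨Finset.mem_erase.2 ⟨(Finset.ne_of_mem_erase hi).symm, ha⟩, Finset.mem_of_mem_erase hi,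
      Finset.ne_of_mem_erase hi⟩
  have h1ne : h1 ≠ 0 := by simpa using hgen 1 0 (by simp)
  simp only [psiVal, resid, LinearMap.coe_mk, AddHom.coe_mk]
  rw [← mul_sub, ← Finset.sum_sub_distrib, Finset.mul_sum, ← add_assoc, ← Finset.sum_add_distrib,
    mul_add, Finset.mul_sum, ← Finset.add_sum_erase _ _ ha, ← Finset.add_sum_erase (Finset.range N)
    (fun i => (2 : ℂ) * _) ha, add_right_comm]
  congr 1
  · have hw : ∀ z, weight u N h1 h2 ((up u hgen N).step f a) a z = weight u N h1 h2 f a z :=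
      fun z => weight_congr u N (fun p hp => (up u hgen N).step_ne f hp) z
    have e1 : xpos u h1 h2 f a + h1 - h1 = xpos u h1 h2 f a := by ring
    have e2 : xpos u h1 h2 f a + h1 - xpos u h1 h2 f a = h1 := by ring
    have e3 : xpos u h1 h2 f a - h1 - xpos u h1 h2 f a = -h1 := by ring
    have e4 : xpos u h1 h2 f a - (xpos u h1 h2 f a + h1) = -h1 := by ring
    have e5 : xpos u h1 h2 f a - h1 - (xpos u h1 h2 f a + h1) = -(h1 + h1) := by ring
    simp only [hw, xpos_up_step_same, e1]
    simp only [weight, prod_gfun, ← Finset.mul_prod_erase (Finset.range N) _ ha, sub_self, zero_add,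
      e2, e3, e4, e5, div_eq_mul_inv, mul_inv]
    ring
  · refine Finset.sum_congr rfl fun i hi => ?_
    obtain ⟨hai, hiN, hia⟩ := hane hi
    have hne : ∀ k : ℤ, xpos u h1 h2 f i - xpos u h1 h2 f a + k * h1 ≠ 0 :=
      xpos_sub_ne_zero u hgen f hia
    have hQ := weight_up_step u hgen N f ha hia
    have g1 := gfun_sub_gfun h1 h2 (xpos u h1 h2 f i - xpos u h1 h2 f a) (by simpa using hne 0)
      (by simpa [sub_eq_add_neg] using hne (-1)) (by simpa using hne 1)
    have g2 := gfun_sub_gfun h1 h2 (xpos u h1 h2 f i - h1 - xpos u h1 h2 f a)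
      (by convert hne (-1) using 1; push_cast; ring)
      (by convert hne (-2) using 1; push_cast; ring) (by convert hne 0 using 1; push_cast; ring)
    have e1 : xpos u h1 h2 f i - h1 - xpos u h1 h2 f i = -h1 := by ring
    rw [xpos_up_step_ne u hgen N f hia, (hQ _).1, (hQ _).1, (hQ _).2, (hQ _).2]
    trans 1 / h1 ^ 2 * (restWeight u N h1 h2 f a i (xpos u h1 h2 f i) * xpos u h1 h2 f i ^ k *
      (gfun h1 h2 (xpos u h1 h2 f i - xpos u h1 h2 f a - h1) -
        gfun h1 h2 (xpos u h1 h2 f i - xpos u h1 h2 f a)) -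
      restWeight u N h1 h2 f a i (xpos u h1 h2 f i - h1) * (xpos u h1 h2 f i - h1) ^ k *
      (gfun h1 h2 (xpos u h1 h2 f i - h1 - xpos u h1 h2 f a - h1) -
        gfun h1 h2 (xpos u h1 h2 f i - h1 - xpos u h1 h2 f a)))
    · ring
    rw [g1, g2]
    simp only [restWeight, prod_gfun, ← Finset.mul_prod_erase _ _ hiN,
      ← Finset.mul_prod_erase _ _ hi, ← Finset.mul_prod_erase _ _ hai,
      Finset.erase_right_comm (a := a), sub_self, zero_add, e1, ← sub_sub, neg_add_cancel]
    generalize xpos u h1 h2 f i = x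
    generalize xpos u h1 h2 f a = y
    have e2 : x - h1 - y + h1 = x - y := by ring
    simp only [e2, div_eq_mul_inv, mul_inv]
    have hsq : (h1 ^ 2)⁻¹ * h1 = h1⁻¹ := by field_simp
    generalize (∏ i ∈ ((Finset.range N).erase i).erase a,
      (x - xpos u h1 h2 f i - h2) * (x - xpos u h1 h2 f i + h1 + h2)) = A
    generalize (∏ i ∈ ((Finset.range N).erase i).erase a,
      (x - h1 - xpos u h1 h2 f i - h2) * (x - h1 - xpos u h1 h2 f i + h1 + h2)) = A'
    generalize (∏ i ∈ ((Finset.range N).erase i).erase a, (x - xpos u h1 h2 f i))⁻¹ = B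
    generalize (∏ i ∈ ((Finset.range N).erase i).erase a, (x - h1 - xpos u h1 h2 f i))⁻¹ = B'
    generalize (∏ i ∈ ((Finset.range N).erase i).erase a, (x - xpos u h1 h2 f i + h1))⁻¹ = C
    generalize (∏ i ∈ ((Finset.range N).erase i).erase a, (x - h1 - xpos u h1 h2 f i + h1))⁻¹ = C'
    have hneg : (-h1)⁻¹ = -h1⁻¹ := inv_neg
    rw [hneg, ← hsq]
    ring

theorem psiVal_zero_up_step (f : ℕ → ℤ) {a : ℕ} (ha : a ∈ Finset.range N) (haN : a + 1 ≠ N)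
    (hf : f (N - 1) = 0) :
    psiVal u N h1 h2 0 ((up u hgen N).step f a) - psiVal u N h1 h2 0 f = 0 := by
  have hd := diffPoly_natDegree (h1 := h1) (h2 := h2) u N f ha
  rw [psiVal_up_step_sub u hgen N f ha haN hf 0 (by omega), pow_zero, mul_one,
    Polynomial.coeff_eq_zero_of_natDegree_lt (by omega), mul_zero]

theorem psiVal_one_up_step (f : ℕ → ℤ) {a : ℕ} (ha : a ∈ Finset.range N) (haN : a + 1 ≠ N)
    (hf : f (N - 1) = 0) :
    psiVal u N h1 h2 1 ((up u hgen N).step f a) - psiVal u N h1 h2 1 f = 0 := by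
  have hd := diffPoly_natDegree (h1 := h1) (h2 := h2) u N f ha
  rw [psiVal_up_step_sub u hgen N f ha haN hf 1 (by omega), Polynomial.coeff_mul_X_pow',
    if_pos (by omega), Polynomial.coeff_eq_zero_of_natDegree_lt (by omega), mul_zero]

theorem psiVal_two_up_step (f : ℕ → ℤ) {a : ℕ} (ha : a ∈ Finset.range N) (haN : a + 1 ≠ N)
    (hf : f (N - 1) = 0) :
    psiVal u N h1 h2 2 ((up u hgen N).step f a) - psiVal u N h1 h2 2 f = 2 := by
  have hd := diffPoly_natDegree (h1 := h1) (h2 := h2) u N f ha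
  rw [psiVal_up_step_sub u hgen N f ha haN hf 2 (by omega), Polynomial.coeff_mul_X_pow',
    if_pos (by omega), show 2 * N + 1 - 2 = (diffPoly u N h1 h2 f a).natDegree by omega]
  have := diffPoly_monic (h1 := h1) (h2 := h2) u N f a
  rw [Polynomial.Monic.coeff_natDegree this, mul_one]

end FockLattice

namespace Fock

open FockLattice

/-- A partition as an integer sequence. -/
def toSeq (lam : Ptn) : ℕ → ℤ := fun i => lam.1 i

theorem toSeq_injective : Function.Injective toSeq := fun _ _ h =>
  Subtype.ext <| funext fun i => Int.ofNat_inj.1 (congrFun h i)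

/-- The embedding of the Fock space into the space of combinations of integer sequences. -/
def toLat : FockSp →ₗ[ℂ] LatSp := Finsupp.lmapDomain ℂ ℂ toSeq

theorem toLat_injective : Function.Injective toLat := Finsupp.mapDomain_injective toSeq_injective

theorem toLat_single (lam : Ptn) (c : ℂ) :
    toLat (Finsupp.single lam c) = Finsupp.single (toSeq lam) c := Finsupp.mapDomain_single

/-- Combinations of partitions with at most `M` parts. -/
def fil (M : ℕ) : Submodule ℂ FockSp := Finsupp.supported ℂ ℂ {lam : Ptn | lam.1 M = 0}

theorem single_mem_fil {M : ℕ} {lam : Ptn} (h : lam.1 M = 0) (c : ℂ) :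
    Finsupp.single lam c ∈ fil M := Finsupp.single_mem_supported ℂ c h

theorem fil_induction {M : ℕ} {A : Type*} [AddCommGroup A] [Module ℂ A] {S T : FockSp →ₗ[ℂ] A}
    (h : ∀ lam : Ptn, lam.1 M = 0 → S (Finsupp.single lam 1) = T (Finsupp.single lam 1))
    {v : FockSp} (hv : v ∈ fil M) : S v = T v := by
  rw [fil, Finsupp.supported_eq_span_single] at hv
  refine LinearMap.eqOn_span (f := S) (g := T) ?_ hv
  rintro _ ⟨lam, hl, rfl⟩
  exact h lam hl

theorem map_fil_le {M M' : ℕ} {S : Module.End ℂ FockSp}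
    (h : ∀ lam : Ptn, lam.1 M = 0 → S (Finsupp.single lam 1) ∈ fil M') {v : FockSp}
    (hv : v ∈ fil M) : S v ∈ fil M' := by
  rw [fil, Finsupp.supported_eq_span_single] at hv
  have hle : Submodule.span ℂ ((fun i => Finsupp.single i (1 : ℂ)) '' {lam : Ptn | lam.1 M = 0}) ≤
      (fil M').comap S := by
    rw [Submodule.span_le]
    rintro _ ⟨lam, hl, rfl⟩
    exact h lam hl
  exact hle hv

theorem plen_le {lam : Ptn} {M : ℕ} (h : lam.1 M = 0) : plen lam ≤ M := Nat.find_min' _ h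

theorem eq_zero_of_plen_le {lam : Ptn} {i : ℕ} (h : plen lam ≤ i) : lam.1 i = 0 :=
  Nat.le_zero.1 ((lam.2.1 h).trans_eq (Nat.find_spec lam.2.2))

theorem addable_le_plen {lam : Ptn} {i : ℕ} (h : Addable lam i) : i ≤ plen lam := by
  by_contra hi
  have := h (plen lam) (by omega)
  rw [eq_zero_of_plen_le le_rfl] at this
  omega

theorem removable_lt_plen {lam : Ptn} {i : ℕ} (h : Removable lam i) : i < plen lam := by
  by_contra hi
  have : lam.1 (i + 1) < lam.1 i := h
  rw [eq_zero_of_plen_le (by omega : plen lam ≤ i)] at this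
  omega

theorem addable_or_eq (lam : Ptn) (i : ℕ) :
    Addable lam i ∨ ∃ p, i = p + 1 ∧ lam.1 p = lam.1 (p + 1) := by
  rcases i with _ | p
  · exact Or.inl fun p hp => by omega
  · rcases eq_or_ne (lam.1 p) (lam.1 (p + 1)) with h | h
    · exact Or.inr ⟨p, rfl, h⟩
    · refine Or.inl fun q hq => ?_
      have h1 := lam.2.1 (Nat.le_succ p)
      have h2 := lam.2.1 (by omega : q ≤ p)
      simp only [Nat.succ_eq_add_one] at h1
      omega

variable {h1 h2 : ℂ} (u : ℂ)
  (hgen : ∀ a b : ℤ, ¬(a = 0 ∧ b = 0) → (a : ℂ) * h1 + (b : ℂ) * h2 ≠ 0) (N : ℕ)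

theorem xpos_toSeq (lam : Ptn) (i : ℕ) :
    xpos u h1 h2 (toSeq lam) i = lam.1 i * h1 + i * h2 + u := by
  simp [xpos, toSeq]

theorem toSeq_addBox (lam : Ptn) {i : ℕ} (h : Addable lam i) :
    toSeq (addBox lam i h) = (up u hgen N).step (toSeq lam) i := by
  funext p
  rcases eq_or_ne p i with rfl | hp
  · rw [StepData.step_same]
    simp [toSeq, addBox, up]
  · rw [StepData.step_ne _ _ hp]
    simp [toSeq, addBox, hp]

theorem toSeq_remBox (lam : Ptn) {i : ℕ} (h : Removable lam i) :
    toSeq (remBox lam i h) = (down u hgen N).step (toSeq lam) i := by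
  funext p
  rcases eq_or_ne p i with rfl | hp
  · rw [StepData.step_same]
    have : lam.1 (p + 1) < lam.1 p := h
    simp [toSeq, remBox, down]
    omega
  · rw [StepData.step_ne _ _ hp]
    simp [toSeq, remBox, hp]

theorem ecoef_eq (j : ℕ) (lam : Ptn) {i : ℕ} (hi : i < N) :
    ecoef h1 h2 u j lam i =
      (up u hgen N).coef h2 (toSeq lam) i * xpos u h1 h2 (toSeq lam) i ^ j := by
  have hr : Finset.range i = (Finset.range N).filter (· < i) := by
    ext p; simp only [Finset.mem_range, Finset.mem_filter]; omega
  have hp : ∀ p t, (up u hgen N).pair h2 p i t = if p < i then gfun h1 h2 t else 1 :=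
    fun p t => if_congr Iff.rfl rfl rfl
  have hs : (up u hgen N).s = Finset.range N := rfl
  have ho : (up u hgen N).own i (toSeq lam i) = 1 / h1 := rfl
  unfold ecoef StepData.coef
  rw [hs, ho, hr, Finset.prod_filter]
  simp only [hp, up_pos, xpos_toSeq]
  congr 2
  refine Finset.prod_congr rfl fun p _ => if_congr Iff.rfl ?_ rfl
  unfold gfun
  congr 1 <;> ring

theorem ecoef_eq_zero (j : ℕ) (lam : Ptn) {i : ℕ} (h : ¬ Addable lam i) :
    ecoef h1 h2 u j lam i = 0 := by
  obtain ⟨p, rfl, hp⟩ := (addable_or_eq lam i).resolve_left h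
  unfold ecoef
  rw [Finset.prod_eq_zero (Finset.self_mem_range_succ p), mul_zero, zero_mul]
  rw [hp]
  push_cast
  simp

theorem telescope (A B C D : ℕ → ℂ) (i n : ℕ) :
    B (i + 1) / C (i + 1) * ∏ p ∈ Finset.Ico (i + 1) (i + 1 + n),
      (A p * B (p + 1)) / (C (p + 1) * D p) =
    B (i + 1 + n) / C (i + 1 + n) *
      ∏ p ∈ Finset.Ico (i + 1) (i + 1 + n), (B p * A p) / (D p * C p) := by
  induction n with
  | zero => simp
  | succ n ih =>
    rw [← add_assoc, Finset.prod_Ico_succ_top (by omega), Finset.prod_Ico_succ_top (by omega),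
      ← mul_assoc, ih]
    simp only [div_eq_mul_inv, mul_inv]
    ring

theorem fcoef_eq (j : ℕ) (lam : Ptn) (hN : plen lam < N) {i : ℕ} (hi : i < N) :
    fcoef h1 h2 u j lam i = (-1) ^ j *
      ((down u hgen N).coef h2 (toSeq lam) i * (h1 - xpos u h1 h2 (toSeq lam) i) ^ j) := by
  obtain ⟨n, rfl⟩ : ∃ n, N = i + 1 + n := ⟨N - (i + 1), by omega⟩
  have hr : Finset.Ico (i + 1) (i + 1 + n) = (Finset.range (i + 1 + n)).filter (i < ·) := by
    ext p; simp only [Finset.mem_Ico, Finset.mem_range, Finset.mem_filter]; omega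
  have hp : ∀ p t, (down u hgen (i + 1 + n)).pair h2 p i t = if i < p then gfun h1 h2 t else 1 :=
    fun p t => if_congr Iff.rfl rfl rfl
  have hs : (down u hgen (i + 1 + n)).s = Finset.range (i + 1 + n) := rfl
  let y := fun p => xpos u h1 h2 (toSeq lam) p - xpos u h1 h2 (toSeq lam) i
  have tel := telescope (fun p => y p + h1 + h2) (fun p => y p - h2) (fun p => y p + h1) y i n
  have hxN : xpos u h1 h2 (toSeq lam) (i + 1 + n) = (i + 1 + n : ℕ) * h2 + u := by
    rw [xpos_toSeq, eq_zero_of_plen_le hN.le]; simp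
  have ho : (down u hgen (i + 1 + n)).own i (toSeq lam i) =
      -(1 / h1) * ((y (i + 1 + n) - h2) / (y (i + 1 + n) + h1)) := by
    simp only [y, hxN]
    simp only [down, xpos]
    congr 2
    ring
  have hcoef : (down u hgen (i + 1 + n)).coef h2 (toSeq lam) i = -(1 / h1) *
      ((y (i + 1) - h2) / (y (i + 1) + h1) * ∏ p ∈ Finset.Ico (i + 1) (i + 1 + n),
      ((y p + h1 + h2) * (y (p + 1) - h2)) / ((y (p + 1) + h1) * y p)) := by
    rw [tel, StepData.coef, ho, hs, hr, Finset.prod_filter, mul_assoc]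
    congr 2
    refine Finset.prod_congr rfl fun p _ => ?_
    rw [hp, down_pos, down_pos]
    refine if_congr Iff.rfl ?_ rfl
    rw [show h1 - xpos u h1 h2 (toSeq lam) i - (h1 - xpos u h1 h2 (toSeq lam) p) = y p by
      simp only [y]; ring]
    rfl
  have hIcc : ∏ p ∈ Finset.Icc (i + 1) (plen lam),
      ((y p + h1 + h2) * (y (p + 1) - h2)) / ((y (p + 1) + h1) * y p) =
      ∏ p ∈ Finset.Ico (i + 1) (i + 1 + n),
      ((y p + h1 + h2) * (y (p + 1) - h2)) / ((y (p + 1) + h1) * y p) := by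
    refine Finset.prod_subset (fun p hp => ?_) fun p hp hp' => ?_
    · simp only [Finset.mem_Icc, Finset.mem_Ico] at hp ⊢
      omega
    · simp only [Finset.mem_Icc, Finset.mem_Ico] at hp hp'
      have hy : y (p + 1) = y p + h2 := by
        simp only [y, xpos_toSeq, eq_zero_of_plen_le (by omega : plen lam ≤ p),
          eq_zero_of_plen_le (by omega : plen lam ≤ p + 1)]
        push_cast
        ring
      have n1 : y p ≠ 0 := by
        simpa using xpos_sub_ne_zero u hgen (toSeq lam) (by omega : p ≠ i) 0
      have n2 : y (p + 1) + h1 ≠ 0 := by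
        simpa using xpos_sub_ne_zero u hgen (toSeq lam) (by omega : p + 1 ≠ i) 1
      rw [div_eq_one_iff_eq (mul_ne_zero n2 n1), hy]
      ring
  have hpow : (-1) ^ j * (h1 - xpos u h1 h2 (toSeq lam) i) ^ j =
      (((lam.1 i : ℂ) - 1) * h1 + (i : ℂ) * h2 + u) ^ j := by
    rw [← mul_pow, xpos_toSeq]
    congr 1
    ring
  rw [mul_left_comm, hpow, hcoef, ← hIcc]
  unfold fcoef
  congr 1
  rw [mul_assoc]
  congr 2
  · simp only [y, xpos_toSeq]
    congr 1 <;> (push_cast; ring)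
  · refine Finset.prod_congr rfl fun p _ => ?_
    simp only [y, xpos_toSeq]
    congr 1 <;> (push_cast; ring)

theorem fcoef_eq_zero (j : ℕ) (lam : Ptn) {i : ℕ} (h : ¬ Removable lam i) :
    fcoef h1 h2 u j lam i = 0 := by
  have h' : lam.1 (i + 1) = lam.1 i := le_antisymm (lam.2.1 (Nat.le_succ i)) (not_lt.1 h)
  unfold fcoef
  rw [h']
  simp

theorem eOp_single (j : ℕ) (lam : Ptn) :
    eOp h1 h2 u j (Finsupp.single lam 1) = evec h1 h2 u j lam := by
  simp [eOp]

theorem fOp_single (j : ℕ) (lam : Ptn) :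
    fOp h1 h2 u j (Finsupp.single lam 1) = fvec h1 h2 u j lam := by
  simp [fOp]

theorem eOp_mem_fil (j : ℕ) {M : ℕ} {v : FockSp} (hv : v ∈ fil M) :
    eOp h1 h2 u j v ∈ fil (M + 1) := by
  refine map_fil_le (fun lam hl => ?_) hv
  rw [eOp_single]
  refine Submodule.sum_mem _ fun i hi => ?_
  split_ifs with h
  · refine single_mem_fil ?_ _
    have := plen_le hl
    have := Finset.mem_range.1 hi
    simp only [addBox]
    rw [Function.update_of_ne (by omega)]
    exact eq_zero_of_plen_le (by omega)
  · exact zero_mem _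

theorem fOp_mem_fil (j : ℕ) {M : ℕ} {v : FockSp} (hv : v ∈ fil M) :
    fOp h1 h2 u j v ∈ fil M := by
  refine map_fil_le (fun lam hl => ?_) hv
  rw [fOp_single]
  refine Submodule.sum_mem _ fun i hi => ?_
  split_ifs with h
  · refine single_mem_fil ?_ _
    have := plen_le hl
    have := Finset.mem_range.1 hi
    simp only [remBox]
    rw [Function.update_of_ne (by omega)]
    exact hl
  · exact zero_mem _

theorem toLat_eOp (j : ℕ) {M : ℕ} (hM : M < N) {v : FockSp} (hv : v ∈ fil M) :
    toLat (eOp h1 h2 u j v) = (up u hgen N).op h2 j (toLat v) := by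
  refine fil_induction (S := toLat ∘ₗ eOp h1 h2 u j) (T := (up u hgen N).op h2 j ∘ₗ toLat)
    (fun lam hl => ?_) hv
  have hl' := plen_le hl
  simp only [LinearMap.comp_apply, eOp_single, toLat_single, StepData.op_single, evec, map_sum]
  have hs : (up u hgen N).s = Finset.range N := rfl
  rw [hs, Finset.sum_subset (Finset.range_subset_range.2 (by omega : plen lam + 1 ≤ N))]
  · refine Finset.sum_congr rfl fun i hi => ?_
    rw [up_pos, one_mul, ← ecoef_eq u hgen N j lam (Finset.mem_range.1 hi)]
    split_ifs with h
    · rw [toLat_single, toSeq_addBox u hgen N]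
    · rw [ecoef_eq_zero u j lam h, map_zero, Finsupp.single_zero]
  · intro i _ hi
    rw [dif_neg fun h => hi (Finset.mem_range.2 (Nat.lt_succ_of_le (addable_le_plen h))), map_zero]

theorem toLat_fOp (j : ℕ) {M : ℕ} (hM : M < N) {v : FockSp} (hv : v ∈ fil M) :
    toLat (fOp h1 h2 u j v) = (-1 : ℂ) ^ j • (down u hgen N).op h2 j (toLat v) := by
  refine fil_induction (S := toLat ∘ₗ fOp h1 h2 u j)
    (T := (-1 : ℂ) ^ j • ((down u hgen N).op h2 j ∘ₗ toLat)) (fun lam hl => ?_) hv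
  have hl' := plen_le hl
  simp only [LinearMap.comp_apply, LinearMap.smul_apply, fOp_single, toLat_single,
    StepData.op_single, fvec, map_sum, Finset.smul_sum, Finsupp.smul_single, smul_eq_mul]
  have hs : (down u hgen N).s = Finset.range N := rfl
  rw [hs, Finset.sum_subset (Finset.range_subset_range.2 (by omega : plen lam ≤ N))]
  · refine Finset.sum_congr rfl fun i hi => ?_
    rw [down_pos, one_mul, ← fcoef_eq u hgen N j lam (by omega) (Finset.mem_range.1 hi)]
    split_ifs with h
    · rw [toLat_single, toSeq_remBox u hgen N]
    · rw [fcoef_eq_zero u j lam h, map_zero, Finsupp.single_zero]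
  · intro i _ hi
    rw [dif_neg fun h => hi (Finset.mem_range.2 (removable_lt_plen h)), map_zero]

theorem eOp_fOp_commutator
    (hgen : ∀ a b : ℤ, ¬(a = 0 ∧ b = 0) → (a : ℂ) * h1 + (b : ℂ) * h2 ≠ 0)
    (i j : ℕ) {M : ℕ} (hM : M + 1 < N) {lam : Ptn} (hl : lam.1 M = 0) :
    eOp h1 h2 u i (fOp h1 h2 u j (Finsupp.single lam 1)) -
      fOp h1 h2 u j (eOp h1 h2 u i (Finsupp.single lam 1)) =
    psiVal u N h1 h2 (i + j) (toSeq lam) • Finsupp.single lam 1 := by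
  have hv := single_mem_fil hl 1
  have hsq : ((-1 : ℂ) ^ j) * (-1) ^ j = 1 := by rw [← mul_pow]; simp
  apply toLat_injective
  rw [map_sub, map_smul, toLat_eOp u hgen N i (by omega) (fOp_mem_fil u j hv),
    toLat_fOp u hgen N j (by omega) hv, toLat_fOp u hgen N j hM (eOp_mem_fil u i hv),
    toLat_eOp u hgen N i (by omega) hv, toLat_single, map_smul, ← smul_sub, up_down_commutator,
    smul_smul, ← mul_assoc, hsq, one_mul]
  rfl

theorem psiOp_single
    (hgen : ∀ a b : ℤ, ¬(a = 0 ∧ b = 0) → (a : ℂ) * h1 + (b : ℂ) * h2 ≠ 0)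
    (k : ℕ) {M : ℕ} (hM : M + 1 < N) {lam : Ptn} (hl : lam.1 M = 0) :
    psiOp h1 h2 u k (Finsupp.single lam 1) =
      psiVal u N h1 h2 k (toSeq lam) • Finsupp.single lam 1 :=
  eOp_fOp_commutator u N hgen k 0 hM hl

/-- Operators on the Fock space that agree on basis vectors are equal. -/
theorem end_ext {S T : Module.End ℂ FockSp}
    (h : ∀ lam : Ptn, S (Finsupp.single lam 1) = T (Finsupp.single lam 1)) : S = T :=
  Finsupp.lhom_ext' fun lam => LinearMap.ext_ring (h lam)

/-- The combination of the partitions obtained by adding a box to `lam` with coefficients `c`. -/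
def addComb (lam : Ptn) : (ℕ → ℂ) →ₗ[ℂ] FockSp where
  toFun c := ∑ i ∈ Finset.range (plen lam + 1),
    if h : Addable lam i then Finsupp.single (addBox lam i h) (c i) else 0
  map_add' c c' := by
    rw [← Finset.sum_add_distrib]
    refine Finset.sum_congr rfl fun i _ => ?_
    split_ifs <;> simp
  map_smul' r c := by
    rw [Finset.smul_sum]
    refine Finset.sum_congr rfl fun i _ => ?_
    split_ifs <;> simp

/-- The combination of the partitions obtained by removing a box from `lam` with
coefficients `c`. -/
def remComb (lam : Ptn) : (ℕ → ℂ) →ₗ[ℂ] FockSp where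
  toFun c := ∑ i ∈ Finset.range (plen lam),
    if h : Removable lam i then Finsupp.single (remBox lam i h) (c i) else 0
  map_add' c c' := by
    rw [← Finset.sum_add_distrib]
    refine Finset.sum_congr rfl fun i _ => ?_
    split_ifs <;> simp
  map_smul' r c := by
    rw [Finset.smul_sum]
    refine Finset.sum_congr rfl fun i _ => ?_
    split_ifs <;> simp

theorem addComb_congr {lam : Ptn} {c c' : ℕ → ℂ} (h : ∀ i ≤ plen lam, c i = c' i) :
    addComb lam c = addComb lam c' := by
  simp only [addComb, LinearMap.coe_mk, AddHom.coe_mk]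
  refine Finset.sum_congr rfl fun i hi => ?_
  rw [h i (Nat.lt_succ_iff.1 (Finset.mem_range.1 hi))]

theorem remComb_congr {lam : Ptn} {c c' : ℕ → ℂ} (h : ∀ i < plen lam, c i = c' i) :
    remComb lam c = remComb lam c' := by
  simp only [remComb, LinearMap.coe_mk, AddHom.coe_mk]
  refine Finset.sum_congr rfl fun i hi => ?_
  rw [h i (Finset.mem_range.1 hi)]

theorem eOp_single_eq_addComb (j : ℕ) (lam : Ptn) :
    eOp h1 h2 u j (Finsupp.single lam 1) =
      addComb lam fun i => ecoef h1 h2 u 0 lam i * xpos u h1 h2 (toSeq lam) i ^ j := by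
  rw [eOp_single]
  refine Finset.sum_congr rfl fun i _ => ?_
  congr! 2
  dsimp only
  rw [xpos_toSeq]
  simp [ecoef]

theorem fOp_single_eq_remComb (j : ℕ) (lam : Ptn) :
    fOp h1 h2 u j (Finsupp.single lam 1) =
      remComb lam fun i => fcoef h1 h2 u 0 lam i * (xpos u h1 h2 (toSeq lam) i - h1) ^ j := by
  rw [fOp_single]
  refine Finset.sum_congr rfl fun i _ => ?_
  congr! 2
  dsimp only
  rw [xpos_toSeq, show (lam.1 i : ℂ) * h1 + i * h2 + u - h1 =
    ((lam.1 i : ℂ) - 1) * h1 + (i : ℂ) * h2 + u by ring]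
  simp [fcoef]

theorem psiOp_addComb (k : ℕ) {lam : Ptn} (hN : plen lam + 2 < N) (c : ℕ → ℂ) :
    psiOp h1 h2 u k (addComb lam c) = addComb lam fun i =>
      c i * psiVal u N h1 h2 k ((up u hgen N).step (toSeq lam) i) := by
  simp only [addComb, LinearMap.coe_mk, AddHom.coe_mk, map_sum]
  refine Finset.sum_congr rfl fun i hi => ?_
  split_ifs with h
  · have hz : (addBox lam i h).1 (plen lam + 1) = 0 := by
      have := Finset.mem_range.1 hi
      simp only [addBox]
      rw [Function.update_of_ne (by omega)]
      exact eq_zero_of_plen_le (by omega)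
    rw [← mul_one (c i), ← smul_eq_mul, ← Finsupp.smul_single, map_smul,
      psiOp_single u N hgen k hN hz, toSeq_addBox u hgen N, smul_smul, Finsupp.smul_single]
    simp
  · rw [map_zero]

theorem psiOp_remComb (k : ℕ) {lam : Ptn} (hN : plen lam + 1 < N) (c : ℕ → ℂ) :
    psiOp h1 h2 u k (remComb lam c) = remComb lam fun i =>
      c i * psiVal u N h1 h2 k ((down u hgen N).step (toSeq lam) i) := by
  simp only [remComb, LinearMap.coe_mk, AddHom.coe_mk, map_sum]
  refine Finset.sum_congr rfl fun i hi => ?_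
  split_ifs with h
  · have hz : (remBox lam i h).1 (plen lam) = 0 := by
      have := Finset.mem_range.1 hi
      simp only [remBox]
      rw [Function.update_of_ne (by omega)]
      exact eq_zero_of_plen_le le_rfl
    rw [← mul_one (c i), ← smul_eq_mul, ← Finsupp.smul_single, map_smul,
      psiOp_single u N hgen k hN hz, toSeq_remBox u hgen N, smul_smul, Finsupp.smul_single]
    simp
  · rw [map_zero]

theorem psiOp_eOp_single (k j : ℕ) (lam : Ptn) :
    psiOp h1 h2 u k (eOp h1 h2 u j (Finsupp.single lam 1)) = addComb lam fun i =>
      ecoef h1 h2 u 0 lam i * xpos u h1 h2 (toSeq lam) i ^ j *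
        psiVal u (plen lam + 3) h1 h2 k ((up u hgen (plen lam + 3)).step (toSeq lam) i) := by
  rw [eOp_single_eq_addComb, psiOp_addComb u hgen (plen lam + 3) k (by omega)]

theorem eOp_psiOp_single
    (hgen : ∀ a b : ℤ, ¬(a = 0 ∧ b = 0) → (a : ℂ) * h1 + (b : ℂ) * h2 ≠ 0)
    (k j : ℕ) (lam : Ptn) :
    eOp h1 h2 u j (psiOp h1 h2 u k (Finsupp.single lam 1)) = addComb lam fun i =>
      ecoef h1 h2 u 0 lam i * xpos u h1 h2 (toSeq lam) i ^ j *
        psiVal u (plen lam + 3) h1 h2 k (toSeq lam) := by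
  rw [psiOp_single u (plen lam + 3) hgen k (by omega) (eq_zero_of_plen_le le_rfl), map_smul,
    eOp_single_eq_addComb, ← map_smul]
  exact addComb_congr fun i _ => mul_comm _ _

theorem psiOp_fOp_single (k j : ℕ) (lam : Ptn) :
    psiOp h1 h2 u k (fOp h1 h2 u j (Finsupp.single lam 1)) = remComb lam fun i =>
      fcoef h1 h2 u 0 lam i * (xpos u h1 h2 (toSeq lam) i - h1) ^ j *
        psiVal u (plen lam + 3) h1 h2 k ((down u hgen (plen lam + 3)).step (toSeq lam) i) := by
  rw [fOp_single_eq_remComb, psiOp_remComb u hgen (plen lam + 3) k (by omega)]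

theorem fOp_psiOp_single
    (hgen : ∀ a b : ℤ, ¬(a = 0 ∧ b = 0) → (a : ℂ) * h1 + (b : ℂ) * h2 ≠ 0)
    (k j : ℕ) (lam : Ptn) :
    fOp h1 h2 u j (psiOp h1 h2 u k (Finsupp.single lam 1)) = remComb lam fun i =>
      fcoef h1 h2 u 0 lam i * (xpos u h1 h2 (toSeq lam) i - h1) ^ j *
        psiVal u (plen lam + 3) h1 h2 k (toSeq lam) := by
  rw [psiOp_single u (plen lam + 3) hgen k (by omega) (eq_zero_of_plen_le le_rfl), map_smul,
    fOp_single_eq_remComb, ← map_smul]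
  exact remComb_congr fun i _ => mul_comm _ _

theorem psiOp_commute
    (hgen : ∀ a b : ℤ, ¬(a = 0 ∧ b = 0) → (a : ℂ) * h1 + (b : ℂ) * h2 ≠ 0) (i j : ℕ) :
    psiOp h1 h2 u i * psiOp h1 h2 u j - psiOp h1 h2 u j * psiOp h1 h2 u i = 0 := by
  refine end_ext fun lam => ?_
  have h := fun k => psiOp_single u (plen lam + 3) hgen k (by omega)
    (eq_zero_of_plen_le (le_refl (plen lam)))
  simp only [LinearMap.sub_apply, Module.End.mul_apply, h, map_smul, smul_smul, mul_comm, sub_self,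
    LinearMap.zero_apply]

theorem psiOp_eOp_cubic
    (hgen : ∀ a b : ℤ, ¬(a = 0 ∧ b = 0) → (a : ℂ) * h1 + (b : ℂ) * h2 ≠ 0) (i j : ℕ) :
    (psiOp h1 h2 u (i+3) * eOp h1 h2 u j - eOp h1 h2 u j * psiOp h1 h2 u (i+3))
      - 3 • (psiOp h1 h2 u (i+2) * eOp h1 h2 u (j+1) - eOp h1 h2 u (j+1) * psiOp h1 h2 u (i+2))
      + 3 • (psiOp h1 h2 u (i+1) * eOp h1 h2 u (j+2) - eOp h1 h2 u (j+2) * psiOp h1 h2 u (i+1))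
      - (psiOp h1 h2 u i * eOp h1 h2 u (j+3) - eOp h1 h2 u (j+3) * psiOp h1 h2 u i)
      + (h1*h2 + h1*(-h1-h2) + h2*(-h1-h2)) •
        ((psiOp h1 h2 u (i+1) * eOp h1 h2 u j - eOp h1 h2 u j * psiOp h1 h2 u (i+1))
          - (psiOp h1 h2 u i * eOp h1 h2 u (j+1) - eOp h1 h2 u (j+1) * psiOp h1 h2 u i))
    = (h1*h2*(-h1-h2)) •
      (psiOp h1 h2 u i * eOp h1 h2 u j + eOp h1 h2 u j * psiOp h1 h2 u i) := by
  refine end_ext fun lam => ?_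
  simp only [LinearMap.sub_apply, LinearMap.add_apply, LinearMap.smul_apply, Module.End.mul_apply,
    psiOp_eOp_single u hgen, eOp_psiOp_single u hgen, ← map_sub, ← map_add, ← map_smul, ← map_nsmul]
  refine addComb_congr fun a ha => ?_
  have h := psiVal_up_step u hgen (plen lam + 3) (toSeq lam) (Finset.mem_range.2 (by omega : a < _))
    i
  simp only [Pi.add_apply, Pi.sub_apply, Pi.smul_apply]
  simp only [smul_eq_mul, nsmul_eq_mul]
  push_cast
  linear_combination (ecoef h1 h2 u 0 lam a * xpos u h1 h2 (toSeq lam) a ^ j) * h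

theorem psiOp_fOp_cubic
    (hgen : ∀ a b : ℤ, ¬(a = 0 ∧ b = 0) → (a : ℂ) * h1 + (b : ℂ) * h2 ≠ 0) (i j : ℕ) :
    (psiOp h1 h2 u (i+3) * fOp h1 h2 u j - fOp h1 h2 u j * psiOp h1 h2 u (i+3))
      - 3 • (psiOp h1 h2 u (i+2) * fOp h1 h2 u (j+1) - fOp h1 h2 u (j+1) * psiOp h1 h2 u (i+2))
      + 3 • (psiOp h1 h2 u (i+1) * fOp h1 h2 u (j+2) - fOp h1 h2 u (j+2) * psiOp h1 h2 u (i+1))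
      - (psiOp h1 h2 u i * fOp h1 h2 u (j+3) - fOp h1 h2 u (j+3) * psiOp h1 h2 u i)
      + (h1*h2 + h1*(-h1-h2) + h2*(-h1-h2)) •
        ((psiOp h1 h2 u (i+1) * fOp h1 h2 u j - fOp h1 h2 u j * psiOp h1 h2 u (i+1))
          - (psiOp h1 h2 u i * fOp h1 h2 u (j+1) - fOp h1 h2 u (j+1) * psiOp h1 h2 u i))
    = (-(h1*h2*(-h1-h2))) •
      (psiOp h1 h2 u i * fOp h1 h2 u j + fOp h1 h2 u j * psiOp h1 h2 u i) := by
  refine end_ext fun lam => ?_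
  simp only [LinearMap.sub_apply, LinearMap.add_apply, LinearMap.smul_apply, Module.End.mul_apply,
    psiOp_fOp_single u hgen, fOp_psiOp_single u hgen, ← map_sub, ← map_add, ← map_smul, ← map_nsmul]
  refine remComb_congr fun a ha => ?_
  have h := psiVal_up_step u hgen (plen lam + 3) ((down u hgen (plen lam + 3)).step (toSeq lam) a)
    (Finset.mem_range.2 (by omega : a < _)) i
  simp only [up_step_down_step, xpos_down_step_same] at h
  simp only [Pi.add_apply, Pi.sub_apply, Pi.smul_apply]
  simp only [smul_eq_mul, nsmul_eq_mul]
  push_cast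
  linear_combination (-(fcoef h1 h2 u 0 lam a * (xpos u h1 h2 (toSeq lam) a - h1) ^ j)) * h

theorem psiOp_eOp_commutator_of_sub
    (hgen : ∀ a b : ℤ, ¬(a = 0 ∧ b = 0) → (a : ℂ) * h1 + (b : ℂ) * h2 ≠ 0) (k j : ℕ) (r : ℂ)
    (hr : ∀ (N : ℕ) (f : ℕ → ℤ) (a : ℕ), a ∈ Finset.range N → a + 1 ≠ N → f (N - 1) = 0 →
      psiVal u N h1 h2 k ((up u hgen N).step f a) - psiVal u N h1 h2 k f = r) :
    psiOp h1 h2 u k * eOp h1 h2 u j - eOp h1 h2 u j * psiOp h1 h2 u k = r • eOp h1 h2 u j := by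
  refine end_ext fun lam => ?_
  simp only [LinearMap.sub_apply, LinearMap.smul_apply, Module.End.mul_apply,
    psiOp_eOp_single u hgen, eOp_psiOp_single u hgen]
  simp only [eOp_single_eq_addComb, ← map_sub, ← map_smul]
  refine addComb_congr fun a ha => ?_
  have hz : toSeq lam (plen lam + 3 - 1) = 0 := by
    simp only [toSeq]
    rw [eq_zero_of_plen_le (by omega), Nat.cast_zero]
  have h := hr (plen lam + 3) (toSeq lam) a (Finset.mem_range.2 (by omega)) (by omega) hz
  simp only [Pi.sub_apply, Pi.smul_apply, smul_eq_mul]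
  linear_combination (ecoef h1 h2 u 0 lam a * xpos u h1 h2 (toSeq lam) a ^ j) * h

theorem psiOp_fOp_commutator_of_sub
    (hgen : ∀ a b : ℤ, ¬(a = 0 ∧ b = 0) → (a : ℂ) * h1 + (b : ℂ) * h2 ≠ 0) (k j : ℕ) (r : ℂ)
    (hr : ∀ (N : ℕ) (f : ℕ → ℤ) (a : ℕ), a ∈ Finset.range N → a + 1 ≠ N → f (N - 1) = 0 →
      psiVal u N h1 h2 k ((up u hgen N).step f a) - psiVal u N h1 h2 k f = r) :
    psiOp h1 h2 u k * fOp h1 h2 u j - fOp h1 h2 u j * psiOp h1 h2 u k = -(r • fOp h1 h2 u j) := by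
  refine end_ext fun lam => ?_
  simp only [LinearMap.sub_apply, LinearMap.smul_apply, LinearMap.neg_apply, Module.End.mul_apply,
    psiOp_fOp_single u hgen, fOp_psiOp_single u hgen]
  simp only [fOp_single_eq_remComb, ← map_sub, ← map_smul, ← map_neg]
  refine remComb_congr fun a ha => ?_
  have hz : (down u hgen (plen lam + 3)).step (toSeq lam) a (plen lam + 3 - 1) = 0 := by
    rw [StepData.step_ne _ _ (by omega)]
    simp only [toSeq]
    rw [eq_zero_of_plen_le (by omega), Nat.cast_zero]
  have h := hr (plen lam + 3) _ a (Finset.mem_range.2 (by omega)) (by omega) hz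
  rw [up_step_down_step] at h
  simp only [Pi.sub_apply, Pi.smul_apply, Pi.neg_apply, smul_eq_mul]
  linear_combination (-(fcoef h1 h2 u 0 lam a * (xpos u h1 h2 (toSeq lam) a - h1) ^ j)) * h

theorem eOp_fOp_commutator_eq_psiOp
    (hgen : ∀ a b : ℤ, ¬(a = 0 ∧ b = 0) → (a : ℂ) * h1 + (b : ℂ) * h2 ≠ 0) (i j : ℕ) :
    eOp h1 h2 u i * fOp h1 h2 u j - fOp h1 h2 u j * eOp h1 h2 u i = psiOp h1 h2 u (i + j) := by
  refine end_ext fun lam => ?_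
  have hl := eq_zero_of_plen_le (le_refl (plen lam))
  rw [psiOp_single u (plen lam + 3) hgen (i + j) (by omega) hl]
  exact eOp_fOp_commutator u (plen lam + 3) hgen i j (by omega) hl

theorem toLat_eOp_eOp (i j : ℕ) (lam : Ptn) :
    toLat (eOp h1 h2 u i (eOp h1 h2 u j (Finsupp.single lam 1))) =
      (up u hgen (plen lam + 3)).op h2 i ((up u hgen (plen lam + 3)).op h2 j
        (Finsupp.single (toSeq lam) 1)) := by
  have hv := single_mem_fil (eq_zero_of_plen_le (le_refl (plen lam))) 1
  rw [toLat_eOp u hgen (plen lam + 3) i (by omega) (eOp_mem_fil u j hv),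
    toLat_eOp u hgen (plen lam + 3) j (by omega) hv,
    toLat_single]

theorem toLat_fOp_fOp (i j : ℕ) (lam : Ptn) :
    toLat (fOp h1 h2 u i (fOp h1 h2 u j (Finsupp.single lam 1))) =
      (-1 : ℂ) ^ (i + j) • (down u hgen (plen lam + 3)).op h2 i
        ((down u hgen (plen lam + 3)).op h2 j (Finsupp.single (toSeq lam) 1)) := by
  have hv := single_mem_fil (eq_zero_of_plen_le (le_refl (plen lam))) 1
  rw [toLat_fOp u hgen (plen lam + 3) i (by omega) (fOp_mem_fil u j hv),
    toLat_fOp u hgen (plen lam + 3) j (by omega) hv,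
    toLat_single, map_smul, smul_smul, pow_add]

theorem toLat_eOp_eOp_eOp (i j k : ℕ) (lam : Ptn) :
    toLat (eOp h1 h2 u i (eOp h1 h2 u j (eOp h1 h2 u k (Finsupp.single lam 1)))) =
      (up u hgen (plen lam + 3)).op h2 i ((up u hgen (plen lam + 3)).op h2 j
        ((up u hgen (plen lam + 3)).op h2 k (Finsupp.single (toSeq lam) 1))) := by
  have hv := single_mem_fil (eq_zero_of_plen_le (le_refl (plen lam))) 1
  rw [toLat_eOp u hgen (plen lam + 3) i (by omega) (eOp_mem_fil u j (eOp_mem_fil u k hv)),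
    toLat_eOp u hgen (plen lam + 3) j (by omega) (eOp_mem_fil u k hv),
    toLat_eOp u hgen (plen lam + 3) k (by omega) hv,
    toLat_single]

theorem toLat_fOp_fOp_fOp (i j k : ℕ) (lam : Ptn) :
    toLat (fOp h1 h2 u i (fOp h1 h2 u j (fOp h1 h2 u k (Finsupp.single lam 1)))) =
      (-1 : ℂ) ^ (i + j + k) • (down u hgen (plen lam + 3)).op h2 i
        ((down u hgen (plen lam + 3)).op h2 j
          ((down u hgen (plen lam + 3)).op h2 k (Finsupp.single (toSeq lam) 1))) := by
  have hv := single_mem_fil (eq_zero_of_plen_le (le_refl (plen lam))) 1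
  rw [toLat_fOp u hgen (plen lam + 3) i (by omega) (fOp_mem_fil u j (fOp_mem_fil u k hv)),
    toLat_fOp u hgen (plen lam + 3) j (by omega) (fOp_mem_fil u k hv),
    toLat_fOp u hgen (plen lam + 3) k (by omega) hv,
    toLat_single]
  simp only [map_smul, smul_smul, pow_add, mul_assoc]

theorem eOp_quadratic
    (hgen : ∀ a b : ℤ, ¬(a = 0 ∧ b = 0) → (a : ℂ) * h1 + (b : ℂ) * h2 ≠ 0) (i j : ℕ) :
    (eOp h1 h2 u (i+3) * eOp h1 h2 u j - eOp h1 h2 u j * eOp h1 h2 u (i+3))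
      - 3 • (eOp h1 h2 u (i+2) * eOp h1 h2 u (j+1) - eOp h1 h2 u (j+1) * eOp h1 h2 u (i+2))
      + 3 • (eOp h1 h2 u (i+1) * eOp h1 h2 u (j+2) - eOp h1 h2 u (j+2) * eOp h1 h2 u (i+1))
      - (eOp h1 h2 u i * eOp h1 h2 u (j+3) - eOp h1 h2 u (j+3) * eOp h1 h2 u i)
      + (h1*h2 + h1*(-h1-h2) + h2*(-h1-h2)) •
        ((eOp h1 h2 u (i+1) * eOp h1 h2 u j - eOp h1 h2 u j * eOp h1 h2 u (i+1))
          - (eOp h1 h2 u i * eOp h1 h2 u (j+1) - eOp h1 h2 u (j+1) * eOp h1 h2 u i))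
    = (h1*h2*(-h1-h2)) • (eOp h1 h2 u i * eOp h1 h2 u j + eOp h1 h2 u j * eOp h1 h2 u i) := by
  refine end_ext fun lam => toLat_injective ?_
  simp only [LinearMap.sub_apply, LinearMap.add_apply, LinearMap.smul_apply, Module.End.mul_apply,
    map_sub, map_add, map_smul, map_nsmul, toLat_eOp_eOp u hgen]
  exact StepData.op_quadratic h2 (up u hgen (plen lam + 3)) i j (toSeq lam)

theorem fOp_quadratic
    (hgen : ∀ a b : ℤ, ¬(a = 0 ∧ b = 0) → (a : ℂ) * h1 + (b : ℂ) * h2 ≠ 0) (i j : ℕ) :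
    (fOp h1 h2 u (i+3) * fOp h1 h2 u j - fOp h1 h2 u j * fOp h1 h2 u (i+3))
      - 3 • (fOp h1 h2 u (i+2) * fOp h1 h2 u (j+1) - fOp h1 h2 u (j+1) * fOp h1 h2 u (i+2))
      + 3 • (fOp h1 h2 u (i+1) * fOp h1 h2 u (j+2) - fOp h1 h2 u (j+2) * fOp h1 h2 u (i+1))
      - (fOp h1 h2 u i * fOp h1 h2 u (j+3) - fOp h1 h2 u (j+3) * fOp h1 h2 u i)
      + (h1*h2 + h1*(-h1-h2) + h2*(-h1-h2)) •
        ((fOp h1 h2 u (i+1) * fOp h1 h2 u j - fOp h1 h2 u j * fOp h1 h2 u (i+1))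
          - (fOp h1 h2 u i * fOp h1 h2 u (j+1) - fOp h1 h2 u (j+1) * fOp h1 h2 u i))
    = (-(h1*h2*(-h1-h2))) •
      (fOp h1 h2 u i * fOp h1 h2 u j + fOp h1 h2 u j * fOp h1 h2 u i) := by
  refine end_ext fun lam => toLat_injective ?_
  have h := StepData.op_quadratic h2 (down u hgen (plen lam + 3)) i j (toSeq lam)
  simp only [LinearMap.sub_apply, LinearMap.add_apply, LinearMap.smul_apply, Module.End.mul_apply,
    map_sub, map_add, map_smul, map_nsmul, toLat_fOp_fOp u hgen]
  linear_combination (norm := module) (-((-1 : ℂ) ^ i * (-1) ^ j)) • h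

theorem eOp_serre
    (hgen : ∀ a b : ℤ, ¬(a = 0 ∧ b = 0) → (a : ℂ) * h1 + (b : ℂ) * h2 ≠ 0) (i : Fin 3 → ℕ) :
    ∑ σ : Equiv.Perm (Fin 3),
      (eOp h1 h2 u (i (σ 0)) * (eOp h1 h2 u (i (σ 1)) * eOp h1 h2 u (i (σ 2) + 1)
            - eOp h1 h2 u (i (σ 2) + 1) * eOp h1 h2 u (i (σ 1)))
        - (eOp h1 h2 u (i (σ 1)) * eOp h1 h2 u (i (σ 2) + 1)
            - eOp h1 h2 u (i (σ 2) + 1) * eOp h1 h2 u (i (σ 1))) * eOp h1 h2 u (i (σ 0))) = 0 := by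
  refine end_ext fun lam => toLat_injective ?_
  simp only [LinearMap.sum_apply, LinearMap.sub_apply, Module.End.mul_apply, map_sub, map_sum,
    toLat_eOp_eOp_eOp u hgen, LinearMap.zero_apply, map_zero]
  exact StepData.op_serre h2 (up u hgen (plen lam + 3)) i (toSeq lam)

theorem fOp_serre
    (hgen : ∀ a b : ℤ, ¬(a = 0 ∧ b = 0) → (a : ℂ) * h1 + (b : ℂ) * h2 ≠ 0) (i : Fin 3 → ℕ) :
    ∑ σ : Equiv.Perm (Fin 3),
      (fOp h1 h2 u (i (σ 0)) * (fOp h1 h2 u (i (σ 1)) * fOp h1 h2 u (i (σ 2) + 1)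
            - fOp h1 h2 u (i (σ 2) + 1) * fOp h1 h2 u (i (σ 1)))
        - (fOp h1 h2 u (i (σ 1)) * fOp h1 h2 u (i (σ 2) + 1)
            - fOp h1 h2 u (i (σ 2) + 1) * fOp h1 h2 u (i (σ 1))) * fOp h1 h2 u (i (σ 0))) = 0 := by
  refine end_ext fun lam => toLat_injective ?_
  have hs (σ : Equiv.Perm (Fin 3)) : i (σ 0) + i (σ 1) + i (σ 2) = i 0 + i 1 + i 2 := by
    simpa only [Fin.sum_univ_three] using Equiv.sum_comp σ i
  have h := congrArg (fun v => (-1 : ℂ) ^ (i 0 + i 1 + i 2 + 1) • v)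
    (StepData.op_serre h2 (down u hgen (plen lam + 3)) i (toSeq lam))
  simp only [smul_zero, Finset.smul_sum] at h
  simp only [LinearMap.sum_apply, LinearMap.sub_apply, Module.End.mul_apply, map_sub, map_sum,
    toLat_fOp_fOp_fOp u hgen, LinearMap.zero_apply, map_zero]
  rw [← h]
  refine Finset.sum_congr rfl fun σ _ => ?_
  rw [show i (σ 0) + i (σ 1) + (i (σ 2) + 1) = i 0 + i 1 + i 2 + 1 by have := hs σ; omega,
    show i (σ 0) + (i (σ 2) + 1) + i (σ 1) = i 0 + i 1 + i 2 + 1 by have := hs σ; omega,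
    show i (σ 1) + (i (σ 2) + 1) + i (σ 0) = i 0 + i 1 + i 2 + 1 by have := hs σ; omega,
    show i (σ 2) + 1 + i (σ 1) + i (σ 0) = i 0 + i 1 + i 2 + 1 by have := hs σ; omega]
  simp only [smul_sub]

end Fock

open Fock

/-- The Fock-module operators `e_j, f_j` and `ψ_k := [e_k, f_0]`
satisfy all defining relations (Y0)–(Y6) of the affine Yangian of `gl_1` with parameters
`h1, h2, h3 = −h1−h2` (and `σ2 = h1h2+h1h3+h2h3`, `σ3 = h1h2h3`); i.e., the free vector
space on the set of partitions is a module over the affine Yangian of `gl_1`. -/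
theorem fock_module_affine_yangian (h1 h2 u : ℂ)
    (hgen : ∀ a b : ℤ, ¬(a = 0 ∧ b = 0) → (a : ℂ) * h1 + (b : ℂ) * h2 ≠ 0) :
    ∀ h3 σ2 σ3 : ℂ, h3 = -h1 - h2 → σ2 = h1*h2 + h1*h3 + h2*h3 → σ3 = h1*h2*h3 →
    -- (Y0)
    (∀ i j : ℕ, psiOp h1 h2 u i * psiOp h1 h2 u j - psiOp h1 h2 u j * psiOp h1 h2 u i = 0) ∧
    -- (Y1)
    (∀ i j : ℕ,
      (eOp h1 h2 u (i+3) * eOp h1 h2 u j - eOp h1 h2 u j * eOp h1 h2 u (i+3))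
        - 3 • (eOp h1 h2 u (i+2) * eOp h1 h2 u (j+1) - eOp h1 h2 u (j+1) * eOp h1 h2 u (i+2))
        + 3 • (eOp h1 h2 u (i+1) * eOp h1 h2 u (j+2) - eOp h1 h2 u (j+2) * eOp h1 h2 u (i+1))
        - (eOp h1 h2 u i * eOp h1 h2 u (j+3) - eOp h1 h2 u (j+3) * eOp h1 h2 u i)
        + σ2 • ((eOp h1 h2 u (i+1) * eOp h1 h2 u j - eOp h1 h2 u j * eOp h1 h2 u (i+1))
            - (eOp h1 h2 u i * eOp h1 h2 u (j+1) - eOp h1 h2 u (j+1) * eOp h1 h2 u i))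
      = σ3 • (eOp h1 h2 u i * eOp h1 h2 u j + eOp h1 h2 u j * eOp h1 h2 u i)) ∧
    -- (Y2)
    (∀ i j : ℕ,
      (fOp h1 h2 u (i+3) * fOp h1 h2 u j - fOp h1 h2 u j * fOp h1 h2 u (i+3))
        - 3 • (fOp h1 h2 u (i+2) * fOp h1 h2 u (j+1) - fOp h1 h2 u (j+1) * fOp h1 h2 u (i+2))
        + 3 • (fOp h1 h2 u (i+1) * fOp h1 h2 u (j+2) - fOp h1 h2 u (j+2) * fOp h1 h2 u (i+1))
        - (fOp h1 h2 u i * fOp h1 h2 u (j+3) - fOp h1 h2 u (j+3) * fOp h1 h2 u i)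
        + σ2 • ((fOp h1 h2 u (i+1) * fOp h1 h2 u j - fOp h1 h2 u j * fOp h1 h2 u (i+1))
            - (fOp h1 h2 u i * fOp h1 h2 u (j+1) - fOp h1 h2 u (j+1) * fOp h1 h2 u i))
      = (-σ3) • (fOp h1 h2 u i * fOp h1 h2 u j + fOp h1 h2 u j * fOp h1 h2 u i)) ∧
    -- (Y3)
    (∀ i j : ℕ,
      eOp h1 h2 u i * fOp h1 h2 u j - fOp h1 h2 u j * eOp h1 h2 u i = psiOp h1 h2 u (i + j)) ∧
    -- (Y4)
    (∀ i j : ℕ,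
      (psiOp h1 h2 u (i+3) * eOp h1 h2 u j - eOp h1 h2 u j * psiOp h1 h2 u (i+3))
        - 3 • (psiOp h1 h2 u (i+2) * eOp h1 h2 u (j+1) - eOp h1 h2 u (j+1) * psiOp h1 h2 u (i+2))
        + 3 • (psiOp h1 h2 u (i+1) * eOp h1 h2 u (j+2) - eOp h1 h2 u (j+2) * psiOp h1 h2 u (i+1))
        - (psiOp h1 h2 u i * eOp h1 h2 u (j+3) - eOp h1 h2 u (j+3) * psiOp h1 h2 u i)
        + σ2 • ((psiOp h1 h2 u (i+1) * eOp h1 h2 u j - eOp h1 h2 u j * psiOp h1 h2 u (i+1))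
            - (psiOp h1 h2 u i * eOp h1 h2 u (j+1) - eOp h1 h2 u (j+1) * psiOp h1 h2 u i))
      = σ3 • (psiOp h1 h2 u i * eOp h1 h2 u j + eOp h1 h2 u j * psiOp h1 h2 u i)) ∧
    -- (Y4′)
    (∀ j : ℕ, psiOp h1 h2 u 0 * eOp h1 h2 u j - eOp h1 h2 u j * psiOp h1 h2 u 0 = 0) ∧
    (∀ j : ℕ, psiOp h1 h2 u 1 * eOp h1 h2 u j - eOp h1 h2 u j * psiOp h1 h2 u 1 = 0) ∧
    (∀ j : ℕ, psiOp h1 h2 u 2 * eOp h1 h2 u j - eOp h1 h2 u j * psiOp h1 h2 u 2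
      = 2 • eOp h1 h2 u j) ∧
    -- (Y5)
    (∀ i j : ℕ,
      (psiOp h1 h2 u (i+3) * fOp h1 h2 u j - fOp h1 h2 u j * psiOp h1 h2 u (i+3))
        - 3 • (psiOp h1 h2 u (i+2) * fOp h1 h2 u (j+1) - fOp h1 h2 u (j+1) * psiOp h1 h2 u (i+2))
        + 3 • (psiOp h1 h2 u (i+1) * fOp h1 h2 u (j+2) - fOp h1 h2 u (j+2) * psiOp h1 h2 u (i+1))
        - (psiOp h1 h2 u i * fOp h1 h2 u (j+3) - fOp h1 h2 u (j+3) * psiOp h1 h2 u i)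
        + σ2 • ((psiOp h1 h2 u (i+1) * fOp h1 h2 u j - fOp h1 h2 u j * psiOp h1 h2 u (i+1))
            - (psiOp h1 h2 u i * fOp h1 h2 u (j+1) - fOp h1 h2 u (j+1) * psiOp h1 h2 u i))
      = (-σ3) • (psiOp h1 h2 u i * fOp h1 h2 u j + fOp h1 h2 u j * psiOp h1 h2 u i)) ∧
    -- (Y5′)
    (∀ j : ℕ, psiOp h1 h2 u 0 * fOp h1 h2 u j - fOp h1 h2 u j * psiOp h1 h2 u 0 = 0) ∧
    (∀ j : ℕ, psiOp h1 h2 u 1 * fOp h1 h2 u j - fOp h1 h2 u j * psiOp h1 h2 u 1 = 0) ∧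
    (∀ j : ℕ, psiOp h1 h2 u 2 * fOp h1 h2 u j - fOp h1 h2 u j * psiOp h1 h2 u 2
      = -(2 • fOp h1 h2 u j)) ∧
    -- (Y6)
    (∀ i : Fin 3 → ℕ, ∑ σ : Equiv.Perm (Fin 3),
      (eOp h1 h2 u (i (σ 0)) * (eOp h1 h2 u (i (σ 1)) * eOp h1 h2 u (i (σ 2) + 1)
            - eOp h1 h2 u (i (σ 2) + 1) * eOp h1 h2 u (i (σ 1)))
        - (eOp h1 h2 u (i (σ 1)) * eOp h1 h2 u (i (σ 2) + 1)
            - eOp h1 h2 u (i (σ 2) + 1) * eOp h1 h2 u (i (σ 1))) * eOp h1 h2 u (i (σ 0))) = 0) ∧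
    (∀ i : Fin 3 → ℕ, ∑ σ : Equiv.Perm (Fin 3),
      (fOp h1 h2 u (i (σ 0)) * (fOp h1 h2 u (i (σ 1)) * fOp h1 h2 u (i (σ 2) + 1)
            - fOp h1 h2 u (i (σ 2) + 1) * fOp h1 h2 u (i (σ 1)))
        - (fOp h1 h2 u (i (σ 1)) * fOp h1 h2 u (i (σ 2) + 1)
            - fOp h1 h2 u (i (σ 2) + 1) * fOp h1 h2 u (i (σ 1))) * fOp h1 h2 u (i (σ 0))) = 0) := by
  rintro h3 σ2 σ3 rfl rfl rfl
  refine ⟨psiOp_commute u hgen, eOp_quadratic u hgen, fOp_quadratic u hgen,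
    eOp_fOp_commutator_eq_psiOp u hgen, psiOp_eOp_cubic u hgen, fun j => ?_, fun j => ?_,
    fun j => ?_, psiOp_fOp_cubic u hgen, fun j => ?_, fun j => ?_, fun j => ?_,
    eOp_serre u hgen, fOp_serre u hgen⟩
  · rw [psiOp_eOp_commutator_of_sub u hgen 0 j 0 fun N f _ =>
      FockLattice.psiVal_zero_up_step u hgen N f, zero_smul]
  · rw [psiOp_eOp_commutator_of_sub u hgen 1 j 0 fun N f _ =>
      FockLattice.psiVal_one_up_step u hgen N f, zero_smul]
  · rw [psiOp_eOp_commutator_of_sub u hgen 2 j 2 fun N f _ =>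
      FockLattice.psiVal_two_up_step u hgen N f, ofNat_smul_eq_nsmul]
  · rw [psiOp_fOp_commutator_of_sub u hgen 0 j 0 fun N f _ =>
      FockLattice.psiVal_zero_up_step u hgen N f, zero_smul]
    exact neg_zero (G := Module.End ℂ FockSp)
  · rw [psiOp_fOp_commutator_of_sub u hgen 1 j 0 fun N f _ =>
      FockLattice.psiVal_one_up_step u hgen N f, zero_smul]
    exact neg_zero (G := Module.End ℂ FockSp)
  · rw [psiOp_fOp_commutator_of_sub u hgen 2 j 2 fun N f _ =>
      FockLattice.psiVal_two_up_step u hgen N f, ofNat_smul_eq_nsmul]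

end
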